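/- arXiv:1702.06654 — 6 statements merged into one kernel-verified Lean document; each statement's English description precedes it below -/
import Mathlib

section
/- Let d ≥ 1 be an integer, α ∈ (0,1), and let f, g : ℝ^d → ℝ be bounded, Lipschitz and integrable. Then f·Lg and (Lf)·g are integrable on ℝ^d and ∫_{ℝ^d} f(x) Lg(x) dx = ∫_{ℝ^d} Lf(x) g(x) dx, i.e. the singular-integral fractional Laplacian is symmetric. -/
/-!
Reversing a jump `z` from `x` is the measure-preserving involution `(x, z) ↦ (x + z, -z)`.
Averaging `f(x) (g(x) - g(x+z)) k(z)`, for an even kernel `k`, with its image under this involution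
gives `½ (f(x) - f(x+z)) (g(x) - g(x+z)) k(z)`, which is symmetric in `f` and `g`. Fubini applies
because a bounded `r`-Hölder function satisfies `|g(x) - g(x+z)| ≲ min(|z|^r, 1)` uniformly in `x`,
while `min(|z|^r, 1) |z|^{-d-α}` is integrable for `0 < α < r`; a Lipschitz function is the case
`r = 1`.
-/

open MeasureTheory Real Set

noncomputable section

/-- The singular-integral fractional Laplacian
`Lφ(x) = ∫_{ℝ^d} (φ(x) - φ(x+z)) / |z|^{d+α} dz`. -/
def fracLap (d : ℕ) (α : ℝ) (φ : EuclideanSpace ℝ (Fin d) → ℝ)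
    (x : EuclideanSpace ℝ (Fin d)) : ℝ :=
  ∫ z : EuclideanSpace ℝ (Fin d), (φ x - φ (x + z)) / ‖z‖ ^ ((d : ℝ) + α)

section JumpOperator

variable {G : Type*} [AddCommGroup G]

/-- The function `f(x) (g(x) - g(x+z)) k(z)` of a starting point `x` and a jump `z`: the integrand
of the pairing of `f` with the nonlocal operator of jump kernel `k` applied to `g`. -/
def jumpIntegrand (k f g : G → ℝ) (p : G × G) : ℝ :=
  f p.1 * ((g p.1 - g (p.1 + p.2)) * k p.2)

lemma jumpIntegrand_add_jumpIntegrand_reverse {k f g : G → ℝ} (hk : Function.Even k) (p : G × G) :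
    jumpIntegrand k f g p + jumpIntegrand k f g (p.1 + p.2, -p.2) =
      (f p.1 - f (p.1 + p.2)) * (g p.1 - g (p.1 + p.2)) * k p.2 := by
  simp only [jumpIntegrand, add_neg_cancel_right, hk p.2]
  ring

variable [MeasurableSpace G]

/-- The nonlocal operator `φ ↦ ∫ (φ(x) - φ(x+z)) k(z) dμ(z)` with jump kernel `k`, of which the
fractional Laplacian is the case `k = fracKernel G α`. -/
def jumpOperator (k : G → ℝ) (μ : Measure G) (φ : G → ℝ) (x : G) : ℝ :=
  ∫ z, (φ x - φ (x + z)) * k z ∂μ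

/-- The Dirichlet form `½ ∬ (f(x) - f(x+z)) (g(x) - g(x+z)) k(z) dμ(x) dμ(z)` of the jump kernel
`k`, written as an integral over `G × G`. -/
def dirichletForm (k : G → ℝ) (μ : Measure G) (f g : G → ℝ) : ℝ :=
  (1 / 2) * ∫ p : G × G, (f p.1 - f (p.1 + p.2)) * (g p.1 - g (p.1 + p.2)) * k p.2 ∂μ.prod μ

variable {k f g : G → ℝ} {μ : Measure G}

lemma dirichletForm_comm : dirichletForm k μ f g = dirichletForm k μ g f := by
  simp only [dirichletForm, mul_comm (f _ - f _)]

lemma integral_jumpIntegrand_right (x : G) :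
    ∫ z, jumpIntegrand k f g (x, z) ∂μ = f x * jumpOperator k μ g x :=
  integral_const_mul (f x) fun z => (g x - g (x + z)) * k z

lemma integrable_mul_jumpOperator [SFinite μ] (h : Integrable (jumpIntegrand k f g) (μ.prod μ)) :
    Integrable (fun x => f x * jumpOperator k μ g x) μ := by
  simpa only [integral_jumpIntegrand_right] using h.integral_prod_left

variable [MeasurableAdd₂ G]

lemma integrable_jumpIntegrand {b : G → ℝ} (hf : Integrable f μ) (hg : Measurable g)
    (hk : Measurable k) (hgb : ∀ x z, |g x - g (x + z)| ≤ b z)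
    (hbk : Integrable (fun z => b z * k z) μ) : Integrable (jumpIntegrand k f g) (μ.prod μ) := by
  have hmeas : AEStronglyMeasurable (jumpIntegrand k f g) (μ.prod μ) :=
    hf.aestronglyMeasurable.comp_fst.mul (Measurable.aestronglyMeasurable (by fun_prop))
  refine (hf.mul_prod hbk).mono hmeas (.of_forall fun p => ?_)
  simp only [jumpIntegrand, norm_mul]
  gcongr _ * (?_ * _)
  exact (hgb _ _).trans (le_abs_self _)

variable [MeasurableNeg G] [SFinite μ] [μ.IsAddLeftInvariant]

lemma measurePreserving_add_neg_snd :
    MeasurePreserving (fun p : G × G => (p.1 + p.2, -p.2)) (μ.prod μ) (μ.prod μ) :=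
  (measurePreserving_add_prod_neg μ μ).comp Measure.measurePreserving_swap

lemma integral_jumpIntegrand (hk : Function.Even k)
    (h : Integrable (jumpIntegrand k f g) (μ.prod μ)) :
    ∫ p, jumpIntegrand k f g p ∂μ.prod μ = dirichletForm k μ f g := by
  have hrev := measurePreserving_add_neg_snd (μ := μ)
  have hrev_int : ∫ p : G × G, jumpIntegrand k f g (p.1 + p.2, -p.2) ∂μ.prod μ =
      ∫ p, jumpIntegrand k f g p ∂μ.prod μ := by
    conv_rhs => rw [← hrev.map_eq]
    exact (integral_map hrev.aemeasurable (hrev.map_eq.symm ▸ h.aestronglyMeasurable)).symm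
  have hsum : ∫ p : G × G, (f p.1 - f (p.1 + p.2)) * (g p.1 - g (p.1 + p.2)) * k p.2 ∂μ.prod μ =
      ∫ p, jumpIntegrand k f g p ∂μ.prod μ + ∫ p, jumpIntegrand k f g p ∂μ.prod μ := by
    simp only [← jumpIntegrand_add_jumpIntegrand_reverse hk]
    exact (integral_add h (hrev.integrable_comp_of_integrable h)).trans (congrArg _ hrev_int)
  rw [dirichletForm, hsum]
  ring

lemma integral_mul_jumpOperator (hk : Function.Even k)
    (h : Integrable (jumpIntegrand k f g) (μ.prod μ)) :
    ∫ x, f x * jumpOperator k μ g x ∂μ = dirichletForm k μ f g := by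
  rw [← integral_jumpIntegrand hk h, integral_prod _ h]
  simp only [integral_jumpIntegrand_right]

theorem jumpOperator_symmetric (hk : Function.Even k)
    (hfg : Integrable (jumpIntegrand k f g) (μ.prod μ))
    (hgf : Integrable (jumpIntegrand k g f) (μ.prod μ)) :
    ∫ x, f x * jumpOperator k μ g x ∂μ = ∫ x, jumpOperator k μ f x * g x ∂μ := by
  simp only [mul_comm _ (g _)]
  rw [integral_mul_jumpOperator hk hfg, integral_mul_jumpOperator hk hgf, dirichletForm_comm]

end JumpOperator

lemma abs_sub_add_le_of_holderWith {E : Type*} [SeminormedAddCommGroup E] {C r : NNReal}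
    {g : E → ℝ} {B : ℝ} (hg : HolderWith C r g) (hB : ∀ x, |g x| ≤ B) (x z : E) :
    |g x - g (x + z)| ≤ max (C : ℝ) (2 * B) * min (‖z‖ ^ (r : ℝ)) 1 := by
  have hholder : |g x - g (x + z)| ≤ C * ‖z‖ ^ (r : ℝ) := by
    simpa only [Real.dist_eq, dist_self_add_right] using hg.dist_le x (x + z)
  have hbound : |g x - g (x + z)| ≤ 2 * B := by
    linarith [abs_sub (g x) (g (x + z)), hB x, hB (x + z)]
  rw [mul_min_of_nonneg _ _ (le_max_of_le_left C.coe_nonneg), mul_one]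
  refine le_min (hholder.trans ?_) (hbound.trans (le_max_right _ _))
  gcongr
  exact le_max_left _ _

section FractionalKernel

lemma integrableOn_min_rpow_one_mul_rpow {α r : ℝ} (hα : 0 < α) (hαr : α < r) :
    IntegrableOn (fun y : ℝ => min (y ^ r) 1 * y ^ (-1 - α)) (Ioi 0) := by
  rw [← Ioc_union_Ioi_eq_Ioi zero_le_one]
  refine IntegrableOn.union ?_ ?_
  · have hint : IntegrableOn (fun y : ℝ => y ^ (r - 1 - α)) (Ioc 0 1) :=
      (intervalIntegrable_iff_integrableOn_Ioc_of_le zero_le_one).1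
        (intervalIntegral.intervalIntegrable_rpow' (by linarith))
    refine hint.congr_fun (fun y hy => ?_) measurableSet_Ioc
    rw [min_eq_left (rpow_le_one hy.1.le hy.2 (hα.trans hαr).le), ← rpow_add hy.1]
    ring_nf
  · have hint : IntegrableOn (fun y : ℝ => y ^ (-1 - α)) (Ioi 1) :=
      integrableOn_Ioi_rpow_of_lt (by linarith) one_pos
    refine hint.congr_fun (fun y hy => ?_) measurableSet_Ioi
    rw [min_eq_right (one_le_rpow (le_of_lt hy) (hα.trans hαr).le), one_mul]

variable {E : Type*} [NormedAddCommGroup E] [NormedSpace ℝ E]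

variable (E) in
/-- The jump kernel `|z|^{-(d+α)}`, `d = dim E`, of the fractional Laplacian of order `α`. -/
def fracKernel (α : ℝ) (z : E) : ℝ :=
  (‖z‖ ^ ((Module.finrank ℝ E : ℝ) + α))⁻¹

lemma even_fracKernel (α : ℝ) : Function.Even (fracKernel E α) := fun z => by
  simp only [fracKernel, norm_neg]

variable [MeasurableSpace E] [BorelSpace E]

lemma measurable_fracKernel (α : ℝ) : Measurable (fracKernel E α) := by
  unfold fracKernel
  fun_prop

variable [FiniteDimensional ℝ E] [Nontrivial E] {μ : Measure E} [μ.IsAddHaarMeasure] {α : ℝ}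

lemma integrable_min_norm_rpow_one_mul_fracKernel {r : ℝ} (hα : 0 < α) (hαr : α < r) :
    Integrable (fun z : E => min (‖z‖ ^ r) 1 * fracKernel E α z) μ := by
  set n := Module.finrank ℝ E
  have hn : 0 < n := Module.finrank_pos
  refine (integrable_fun_norm_addHaar μ
    (f := fun y => min (y ^ r) 1 * (y ^ ((n : ℝ) + α))⁻¹)).2 ?_
  refine (integrableOn_min_rpow_one_mul_rpow hα hαr).congr_fun (fun y hy => ?_) measurableSet_Ioi
  have hpow : y ^ (n - 1) * (y ^ ((n : ℝ) + α))⁻¹ = y ^ (-1 - α) := by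
    rw [← rpow_natCast, ← rpow_neg (le_of_lt hy), ← rpow_add hy, Nat.cast_pred hn]
    ring_nf
  rw [smul_eq_mul, mul_left_comm, hpow]

lemma integrable_jumpIntegrand_fracKernel {C r : NNReal} {f g : E → ℝ} (hα : 0 < α) (hαr : α < r)
    (hf : Integrable f μ) (hgbd : ∃ B : ℝ, ∀ x, |g x| ≤ B) (hg : HolderWith C r g) :
    Integrable (jumpIntegrand (fracKernel E α) f g) (μ.prod μ) := by
  obtain ⟨B, hB⟩ := hgbd
  have hr : 0 < r := NNReal.coe_pos.1 (hα.trans hαr)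
  refine integrable_jumpIntegrand hf (hg.continuous hr).measurable (measurable_fracKernel α)
    (abs_sub_add_le_of_holderWith hg hB) ?_
  simpa only [mul_assoc] using (integrable_min_norm_rpow_one_mul_fracKernel hα hαr).const_mul _

theorem fracLap_symmetric_general {C D r s : NNReal} {f g : E → ℝ}
    (hα : 0 < α) (hαr : α < r) (hαs : α < s)
    (hfbd : ∃ B : ℝ, ∀ x, |f x| ≤ B) (hgbd : ∃ B : ℝ, ∀ x, |g x| ≤ B)
    (hfHolder : HolderWith C r f) (hgHolder : HolderWith D s g)
    (hfint : Integrable f μ) (hgint : Integrable g μ) :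
    Integrable (fun x => f x * jumpOperator (fracKernel E α) μ g x) μ ∧
    Integrable (fun x => jumpOperator (fracKernel E α) μ f x * g x) μ ∧
    ∫ x, f x * jumpOperator (fracKernel E α) μ g x ∂μ =
      ∫ x, jumpOperator (fracKernel E α) μ f x * g x ∂μ := by
  have hfg := integrable_jumpIntegrand_fracKernel hα hαs hfint hgbd hgHolder
  have hgf := integrable_jumpIntegrand_fracKernel hα hαr hgint hfbd hfHolder
  refine ⟨integrable_mul_jumpOperator hfg, ?_, jumpOperator_symmetric (even_fracKernel α) hfg hgf⟩
  simpa only [mul_comm] using integrable_mul_jumpOperator hgf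

end FractionalKernel

lemma fracLap_eq_jumpOperator (d : ℕ) (α : ℝ) :
    fracLap d α = jumpOperator (fracKernel (EuclideanSpace ℝ (Fin d)) α) volume := by
  ext φ x
  simp only [fracLap, jumpOperator, fracKernel, finrank_euclideanSpace_fin, div_eq_mul_inv]

/-- For `α ∈ (0,1)` and bounded Lipschitz integrable
`f, g : ℝ^d → ℝ`, the functions `f·Lg` and `(Lf)·g` are integrable and
`∫ f·Lg = ∫ (Lf)·g`: the singular-integral fractional Laplacian is symmetric. -/
theorem fracLap_symmetric
    (d : ℕ) (hd : 1 ≤ d) (α : ℝ) (hα : α ∈ Set.Ioo (0 : ℝ) 1)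
    (f g : EuclideanSpace ℝ (Fin d) → ℝ)
    (hfbd : ∃ B : ℝ, ∀ x, |f x| ≤ B) (hgbd : ∃ B : ℝ, ∀ x, |g x| ≤ B)
    (hfLip : ∃ M : NNReal, LipschitzWith M f) (hgLip : ∃ M : NNReal, LipschitzWith M g)
    (hfint : Integrable f) (hgint : Integrable g) :
    Integrable (fun x => f x * fracLap d α g x) ∧
    Integrable (fun x => fracLap d α f x * g x) ∧
    (∫ x : EuclideanSpace ℝ (Fin d), f x * fracLap d α g x) =
      ∫ x : EuclideanSpace ℝ (Fin d), fracLap d α f x * g x := by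
  obtain ⟨M, hM⟩ := hfLip
  obtain ⟨N, hN⟩ := hgLip
  have : Nonempty (Fin d) := ⟨⟨0, hd⟩⟩
  rw [fracLap_eq_jumpOperator]
  exact fracLap_symmetric_general (r := 1) (s := 1) hα.1 hα.2 hα.2 hfbd hgbd
    hM.holderWith hN.holderWith hfint hgint
end
end

section
/- Let d ≥ 1 be an integer, α ∈ (0,1), let u : ℝ^d → ℝ be bounded and Lipschitz, and let η : ℝ → ℝ be convex and differentiable. Then η∘u is bounded and Lipschitz, so L(η∘u) is defined pointwise, and for every x ∈ ℝ^d one has L(η∘u)(x) ≤ η'(u(x)) · Lu(x). In particular the kinetic defect θ'(u(x))·(−Δ)^{α/2}u(x) − (−Δ)^{α/2}θ(u)(x) is nonnegative for every convex differentiable entropy θ. -/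
/-!
A convex `η` lies above its tangent at `u x`, so
`η (u x) - η (u (x + z)) ≤ η' (u x) * (u x - u (x + z))` for every increment `z`. Integrating this
against the kernel `‖z‖ ^ (-(d + α))` gives the inequality. Both integrals converge because the
increments of a bounded Lipschitz function are `O(min ‖z‖ 1)`, and `η ∘ u` is again bounded and
Lipschitz since `η` is Lipschitz on compact sets.

The kernel enters only as a Lévy measure `ν` with `∫ min (‖z‖ ^ β) 1 dν < ∞`, where `β` is the
Hölder exponent of `u`, and the tangent only as a supporting hyperplane.
-/

open MeasureTheory Real Set

noncomputable section

open Bornology Metric Module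
open scoped NNReal

section Subgradient

variable {F : Type*} [NormedAddCommGroup F] [NormedSpace ℝ F] {η : F → ℝ} {p : F →L[ℝ] ℝ} {a : F}

/-- `p` is a subgradient of `η` at `a`: the affine function through `(a, η a)` with linear part `p`
lies below `η` everywhere. It replaces the derivative in the convexity inequality. -/
def IsSubgradientAt (η : F → ℝ) (p : F →L[ℝ] ℝ) (a : F) : Prop :=
  ∀ b, η a + p (b - a) ≤ η b

lemma IsSubgradientAt.sub_le (hp : IsSubgradientAt η p a) (b : F) : η a - η b ≤ p (a - b) := by
  have := hp b
  rw [← neg_sub a b, map_neg] at this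
  linarith

lemma isSubgradientAt_of_hasFDerivAt (hη : ConvexOn ℝ univ η) (hp : HasFDerivAt η p a) :
    IsSubgradientAt η p a := by
  intro b
  have hderiv : HasDerivAt (η ∘ AffineMap.lineMap (k := ℝ) a b) (p (b - a)) 0 :=
    HasFDerivAt.comp_hasDerivAt 0 (by simpa using hp) AffineMap.hasDerivAt_lineMap
  have hslope := (hη.comp_affineMap (AffineMap.lineMap a b)).le_slope_of_hasDerivAt
    (mem_univ 0) (mem_univ 1) one_pos hderiv
  simp only [slope_def_field, Function.comp_apply, AffineMap.lineMap_apply_one,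
    AffineMap.lineMap_apply_zero, sub_zero, div_one] at hslope
  linarith

end Subgradient

section Composition

variable {X Y Z : Type*} [PseudoMetricSpace Y] [ProperSpace Y] {u : X → Y} {η : Y → Z}

lemma isBounded_range_comp_of_continuous [PseudoMetricSpace Z] (hu : IsBounded (range u))
    (hη : Continuous η) : IsBounded (range (η ∘ u)) := by
  rw [range_comp]
  exact (hu.isCompact_closure.image hη).isBounded.subset (image_mono subset_closure)

lemma exists_holderWith_comp_of_locallyLipschitz [PseudoEMetricSpace X] [PseudoMetricSpace Z]
    {C r : ℝ≥0} (hu : HolderWith C r u) (hub : IsBounded (range u)) (hη : LocallyLipschitz η) :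
    ∃ C', HolderWith C' r (η ∘ u) := by
  obtain ⟨K, hK⟩ :=
    (hη.locallyLipschitzOn (s := closure (range u))).exists_lipschitzOnWith_of_compact
      hub.isCompact_closure
  refine ⟨K * C ^ ((1 : ℝ≥0) : ℝ), ?_⟩
  simpa only [one_mul] using (holderOnWith_one.2 hK).comp_holderWith hu
    fun x ↦ subset_closure (mem_range_self x)

end Composition

lemma dist_le_mul_min_of_holderWith {X Y : Type*} [PseudoMetricSpace X] [PseudoMetricSpace Y]
    {φ : X → Y} {C r : ℝ≥0} (hφ : HolderWith C r φ) (hφb : IsBounded (range φ)) (x y : X) :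
    dist (φ x) (φ y) ≤ (C + diam (range φ)) * min (dist x y ^ (r : ℝ)) 1 := by
  have hnear : dist (φ x) (φ y) ≤ C * dist x y ^ (r : ℝ) := hφ.dist_le x y
  have hfar : dist (φ x) (φ y) ≤ diam (range φ) :=
    dist_le_diam_of_mem hφb (mem_range_self x) (mem_range_self y)
  have hpow : 0 ≤ dist x y ^ (r : ℝ) := by positivity
  rcases le_total (dist x y ^ (r : ℝ)) 1 with h | h
  · rw [min_eq_left h]
    nlinarith [diam_nonneg (s := range φ)]
  · rw [min_eq_right h]
    linarith [C.coe_nonneg]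

section LevyOperator

variable {E F : Type*} [NormedAddCommGroup E] [MeasurableSpace E]
  [NormedAddCommGroup F] {ν : Measure E}

lemma integrable_increment_of_holderWith [OpensMeasurableSpace E] [SecondCountableTopology F]
    {β C : ℝ≥0} (hβ : 0 < β) (hν : Integrable (fun z ↦ min (‖z‖ ^ (β : ℝ)) 1) ν) {φ : E → F}
    (hφ : HolderWith C β φ) (hφb : IsBounded (range φ)) (x : E) :
    Integrable (fun z ↦ φ x - φ (x + z)) ν := by
  have hcont : Continuous fun z ↦ φ x - φ (x + z) := by
    have := hφ.continuous hβ
    fun_prop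
  refine (hν.const_mul (C + diam (range φ))).mono' hcont.aestronglyMeasurable
    (.of_forall fun z ↦ ?_)
  simpa [dist_eq_norm] using dist_le_mul_min_of_holderWith hφ hφb x (x + z)

variable [NormedSpace ℝ F]

/-- The nonlocal operator `φ ↦ ∫ (φ x - φ (x + z)) dν(z)` with Lévy measure `ν`, which for the
`α`-stable measure is the fractional Laplacian `(-Δ)^{α/2}` up to a constant factor. No small-jump
compensator is subtracted, so it is meant for `φ` whose increments are `ν`-integrable. -/
def levyOperator (ν : Measure E) (φ : E → F) (x : E) : F :=
  ∫ z, (φ x - φ (x + z)) ∂ν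

lemma levyOperator_comp_le_of_isSubgradientAt [CompleteSpace F] {u : E → F} {η : F → ℝ}
    {p : F →L[ℝ] ℝ} {x : E} (hp : IsSubgradientAt η p (u x))
    (hu : Integrable (fun z ↦ u x - u (x + z)) ν)
    (hηu : Integrable (fun z ↦ η (u x) - η (u (x + z))) ν) :
    levyOperator ν (η ∘ u) x ≤ p (levyOperator ν u x) :=
  calc
    levyOperator ν (η ∘ u) x ≤ ∫ z, p (u x - u (x + z)) ∂ν :=
      integral_mono hηu (p.integrable_comp hu) fun z ↦ hp.sub_le (u (x + z))
    _ = p (levyOperator ν u x) := p.integral_comp_comm hu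

end LevyOperator

lemma integrableOn_Ioi_rpow_mul_min {α β : ℝ} (hα : 0 < α) (hαβ : α < β) :
    IntegrableOn (fun r : ℝ ↦ r ^ (-1 - α) * min (r ^ β) 1) (Ioi 0) := by
  have hnear : IntegrableOn (fun r : ℝ ↦ r ^ (-1 - α) * min (r ^ β) 1) (Ioo 0 1) := by
    refine ((intervalIntegral.integrableOn_Ioo_rpow_iff one_pos).2
      (by linarith : -1 < -1 - α + β)).congr_fun (fun r hr ↦ ?_) measurableSet_Ioo
    simp only [min_eq_left (rpow_le_one hr.1.le hr.2.le (hα.trans hαβ).le), rpow_add hr.1]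
  have hfar : IntegrableOn (fun r : ℝ ↦ r ^ (-1 - α) * min (r ^ β) 1) (Ici 1) := by
    rw [integrableOn_Ici_iff_integrableOn_Ioi]
    refine (integrableOn_Ioi_rpow_of_lt (by linarith : -1 - α < -1) one_pos).congr_fun
      (fun r hr ↦ ?_) measurableSet_Ioi
    simp only [min_eq_right (one_le_rpow (le_of_lt hr) (hα.trans hαβ).le), mul_one]
  simpa only [Ioo_union_Ici_eq_Ioi zero_lt_one] using hnear.union hfar

section StableLevyMeasure

variable {E : Type*} [NormedAddCommGroup E] [NormedSpace ℝ E] [MeasurableSpace E]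

/-- The isotropic `α`-stable Lévy measure, with density `‖z‖ ^ (-(dim E + α))` relative to the
reference measure `μ`. The real inverse assigns the density `0` at the origin when
`dim E + α ≠ 0`. -/
def stableLevyMeasure (μ : Measure E) (α : ℝ) : Measure E :=
  μ.withDensity fun z ↦ ENNReal.ofReal (‖z‖ ^ (finrank ℝ E + α))⁻¹

lemma integrable_stableLevyMeasure_iff [OpensMeasurableSpace E] {F : Type*} [NormedAddCommGroup F]
    [NormedSpace ℝ F] {μ : Measure E} {α : ℝ} {g : E → F} :
    Integrable g (stableLevyMeasure μ α) ↔
      Integrable (fun z ↦ (‖z‖ ^ (finrank ℝ E + α))⁻¹ • g z) μ := by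
  rw [stableLevyMeasure, integrable_withDensity_iff_integrable_smul' (by fun_prop) (by simp)]
  simp only [ENNReal.toReal_ofReal (inv_nonneg.2 (rpow_nonneg (norm_nonneg _) _))]

lemma integral_stableLevyMeasure [OpensMeasurableSpace E] {F : Type*} [NormedAddCommGroup F]
    [NormedSpace ℝ F] (μ : Measure E) (α : ℝ) (g : E → F) :
    ∫ z, g z ∂stableLevyMeasure μ α = ∫ z, (‖z‖ ^ (finrank ℝ E + α))⁻¹ • g z ∂μ := by
  rw [stableLevyMeasure, integral_withDensity_eq_integral_toReal_smul (by fun_prop) (by simp)]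
  simp only [ENNReal.toReal_ofReal (inv_nonneg.2 (rpow_nonneg (norm_nonneg _) _))]

lemma integrable_min_norm_rpow_one_stableLevyMeasure [FiniteDimensional ℝ E] [Nontrivial E]
    [BorelSpace E] (μ : Measure E) [μ.IsAddHaarMeasure] {α β : ℝ} (hα : 0 < α) (hαβ : α < β) :
    Integrable (fun z ↦ min (‖z‖ ^ β) 1) (stableLevyMeasure μ α) := by
  rw [integrable_stableLevyMeasure_iff]
  refine (integrable_fun_norm_addHaar μ
    (f := fun r ↦ (r ^ (finrank ℝ E + α))⁻¹ • min (r ^ β) 1)).2 ?_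
  refine (integrableOn_Ioi_rpow_mul_min hα hαβ).congr_fun (fun r (hr : 0 < r) ↦ ?_)
    measurableSet_Ioi
  have hradial : r ^ (-1 - α) = r ^ (finrank ℝ E - 1) * (r ^ (finrank ℝ E + α))⁻¹ := by
    rw [← rpow_natCast, ← rpow_neg hr.le, ← rpow_add hr, Nat.cast_pred finrank_pos]
    ring_nf
  simp only [smul_eq_mul, hradial, mul_assoc]

end StableLevyMeasure

lemma fracLap_eq_levyOperator (d : ℕ) (α : ℝ) (φ : EuclideanSpace ℝ (Fin d) → ℝ) :
    fracLap d α φ = levyOperator (stableLevyMeasure volume α) φ := by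
  ext x
  simp only [fracLap, levyOperator, integral_stableLevyMeasure, finrank_euclideanSpace_fin,
    smul_eq_mul, div_eq_inv_mul]

theorem fracLap_convex_entropy_inequality_general {E F : Type*} [NormedAddCommGroup E]
    [MeasurableSpace E] [OpensMeasurableSpace E] [NormedAddCommGroup F] [NormedSpace ℝ F]
    [FiniteDimensional ℝ F] {ν : Measure E} {β : ℝ≥0} (hβ : 0 < β)
    (hν : Integrable (fun z ↦ min (‖z‖ ^ (β : ℝ)) 1) ν) {u : E → F}
    (hub : IsBounded (range u)) (hu : ∃ C, HolderWith C β u)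
    {η : F → ℝ} (hη : LocallyLipschitz η) :
    IsBounded (range (η ∘ u)) ∧ (∃ C, HolderWith C β (η ∘ u)) ∧
      ∀ x p, IsSubgradientAt η p (u x) →
        levyOperator ν (η ∘ u) x ≤ p (levyOperator ν u x) := by
  obtain ⟨C, hC⟩ := hu
  have hηub := isBounded_range_comp_of_continuous hub hη.continuous
  obtain ⟨C', hC'⟩ := exists_holderWith_comp_of_locallyLipschitz hC hub hη
  exact ⟨hηub, ⟨C', hC'⟩, fun x p hp ↦ levyOperator_comp_le_of_isSubgradientAt hp
    (integrable_increment_of_holderWith hβ hν hC hub x)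
    (integrable_increment_of_holderWith hβ hν hC' hηub x)⟩

/-- For `α ∈ (0,1)`, `u : ℝ^d → ℝ` bounded Lipschitz, and
`η : ℝ → ℝ` convex and differentiable, the composition `η ∘ u` is bounded and
Lipschitz, and the convexity (Kato-type) inequality
`L(η∘u)(x) ≤ η'(u(x)) · Lu(x)` holds for every `x`. -/
theorem fracLap_convex_entropy_inequality
    (d : ℕ) (hd : 1 ≤ d) (α : ℝ) (hα : α ∈ Set.Ioo (0 : ℝ) 1)
    (u : EuclideanSpace ℝ (Fin d) → ℝ)
    (hubd : ∃ B : ℝ, ∀ x, |u x| ≤ B) (huLip : ∃ M : NNReal, LipschitzWith M u)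
    (η : ℝ → ℝ) (hconv : ConvexOn ℝ Set.univ η) (hdiff : Differentiable ℝ η) :
    (∃ B : ℝ, ∀ x, |η (u x)| ≤ B) ∧
    (∃ M : NNReal, LipschitzWith M (fun x => η (u x))) ∧
    ∀ x : EuclideanSpace ℝ (Fin d),
      fracLap d α (fun y => η (u y)) x ≤ deriv η (u x) * fracLap d α u x := by
  have : Nonempty (Fin d) := ⟨⟨0, hd⟩⟩
  have hν := integrable_min_norm_rpow_one_stableLevyMeasure
    (volume : Measure (EuclideanSpace ℝ (Fin d))) hα.1 hα.2
  simp only [← holderWith_one] at huLip ⊢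
  obtain ⟨hbdd, hholder, hle⟩ := fracLap_convex_entropy_inequality_general one_pos hν
    (isBounded_iff_forall_norm_le.2 (by simpa using hubd)) huLip hconv.locallyLipschitz
  refine ⟨by simpa using isBounded_iff_forall_norm_le.1 hbdd, hholder, fun x ↦ ?_⟩
  rw [fracLap_eq_levyOperator, fracLap_eq_levyOperator, ← fderiv_eq_deriv_mul]
  exact hle x _ (isSubgradientAt_of_hasFDerivAt hconv (hdiff _).hasFDerivAt)
end
end

section
/- Let d ≥ 1 be an integer, α ∈ (0,1), let u : ℝ^d → ℝ be bounded and Lipschitz, and let v ∈ ℝ. Then the function x ↦ |u(x) − v| is bounded and Lipschitz, so L(|u − v|) is defined pointwise, and for every x ∈ ℝ^d one has L(|u − v|)(x) ≤ sgn(u(x) − v) · Lu(x), where sgn(t) equals 1 for t > 0, −1 for t < 0, and 0 for t = 0. -/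
open MeasureTheory Real Set

noncomputable section

/-!
The inequality already holds between the integrands. If `Φ` lies above the line of slope `p` through
`(u x, Φ (u x))`, then `Φ (u x) - Φ (u (x + z)) ≤ p * (u x - u (x + z))` for every `z`; dividing by
the positive kernel and integrating gives `L(Φ ∘ u)(x) ≤ p * Lu(x)`. For `Φ = |· - v|` the slope
`sgn (u x - v)` is admissible. Integrating is legitimate because the increments of `u` at `x` are
`O(|z|)` near the origin, which tames the kernel when `α < 1`, and bounded at infinity, where the
kernel is integrable when `α > 0`; composing with a Lipschitz `Φ` preserves this.
-/

open Module Metric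
open scoped NNReal

section NormRpow

variable {E : Type*} [NormedAddCommGroup E] [NormedSpace ℝ E] [FiniteDimensional ℝ E]
  [MeasurableSpace E] [BorelSpace E] {μ : Measure E} [μ.IsAddHaarMeasure]

theorem integrableOn_compl_ball_norm_rpow_neg {r s : ℝ} (hr : 0 < r) (hs : finrank ℝ E < s) :
    IntegrableOn (fun z : E => ‖z‖ ^ (-s)) (ball 0 r)ᶜ μ := by
  have hs₀ : 0 < s := (Nat.cast_nonneg _).trans_lt hs
  have bracket_integrable :
      Integrable (fun z : E => (r / (1 + r)) ^ (-s) * (1 + ‖z‖) ^ (-s)) μ :=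
    (integrable_one_add_norm hs).const_mul _
  refine bracket_integrable.integrableOn.mono' (measurable_norm.pow_const _).aestronglyMeasurable
    (ae_restrict_of_forall_mem measurableSet_ball.compl fun z hz => ?_)
  have hrz : r ≤ ‖z‖ := by simpa using hz
  have bracket_le : r / (1 + r) * (1 + ‖z‖) ≤ ‖z‖ := by
    rw [div_mul_eq_mul_div, div_le_iff₀ (by positivity)]
    linarith
  calc ‖‖z‖ ^ (-s)‖ = ‖z‖ ^ (-s) := Real.norm_of_nonneg (by positivity)
    _ ≤ (r / (1 + r) * (1 + ‖z‖)) ^ (-s) :=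
      rpow_le_rpow_of_nonpos (by positivity) bracket_le (neg_nonpos.mpr hs₀.le)
    _ = (r / (1 + r)) ^ (-s) * (1 + ‖z‖) ^ (-s) := mul_rpow (by positivity) (by positivity)

theorem integrableOn_compl_ball_div_norm_rpow {f : E → ℝ} {B r s : ℝ} (hr : 0 < r)
    (hs : finrank ℝ E < s) (hf : AEStronglyMeasurable f μ) (hB : ∀ z ∉ ball 0 r, |f z| ≤ B) :
    IntegrableOn (fun z => f z / ‖z‖ ^ s) (ball 0 r)ᶜ μ := by
  have hprod : IntegrableOn (fun z => f z * ‖z‖ ^ (-s)) (ball 0 r)ᶜ μ :=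
    (integrableOn_compl_ball_norm_rpow_neg hr hs).bdd_mul hf.restrict
      (ae_restrict_of_forall_mem measurableSet_ball.compl hB)
  simpa only [rpow_neg (norm_nonneg _), ← div_eq_mul_inv] using hprod

variable [Nontrivial E]

theorem integrableOn_ball_div_norm_rpow {f : E → ℝ} {C β r s : ℝ} (hs : s < finrank ℝ E + β)
    (hf : AEStronglyMeasurable f μ) (hC : ∀ z ∈ ball 0 r, |f z| ≤ C * ‖z‖ ^ β) :
    IntegrableOn (fun z => f z / ‖z‖ ^ s) (ball 0 r) μ := by
  refine integrableOn_ball_of_norm_le_rpow (C := C) (α := s - β) finrank_pos (by linarith) ?_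
    (hf.div₀ (measurable_norm.pow_const _).aestronglyMeasurable)
  filter_upwards [ae_restrict_mem measurableSet_ball, ae_restrict_of_ae (Measure.ae_ne μ 0)]
    with z hz hz₀
  have hz_pos : 0 < ‖z‖ := norm_pos_iff.mpr hz₀
  calc ‖f z / ‖z‖ ^ s‖ = |f z| / ‖z‖ ^ s := by
        rw [norm_div, Real.norm_eq_abs, Real.norm_of_nonneg (by positivity)]
    _ ≤ C * ‖z‖ ^ β / ‖z‖ ^ s := by gcongr; exact hC z hz
    _ = C * ‖z‖ ^ (-(s - β)) := by rw [neg_sub, rpow_sub hz_pos, mul_div_assoc]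

theorem integrable_div_norm_rpow {f : E → ℝ} {B C β s : ℝ} (hs : finrank ℝ E < s)
    (hsβ : s < finrank ℝ E + β) (hf : AEStronglyMeasurable f μ) (hB : ∀ z, |f z| ≤ B)
    (hC : ∀ z, |f z| ≤ C * ‖z‖ ^ β) :
    Integrable (fun z => f z / ‖z‖ ^ s) μ := by
  have hnear := integrableOn_ball_div_norm_rpow (r := 1) hsβ hf fun z _ => hC z
  have hfar := integrableOn_compl_ball_div_norm_rpow one_pos hs hf fun z _ => hB z
  simpa only [union_compl_self, integrableOn_univ] using hnear.union hfar

end NormRpow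

/-- `Lφ(x)` is well defined: its integrand is integrable, so that `fracLap d α φ x` is not merely
the default value `0` of a divergent integral. -/
def FracLapIntegrable (d : ℕ) (α : ℝ) (φ : EuclideanSpace ℝ (Fin d) → ℝ)
    (x : EuclideanSpace ℝ (Fin d)) : Prop :=
  Integrable fun z : EuclideanSpace ℝ (Fin d) => (φ x - φ (x + z)) / ‖z‖ ^ ((d : ℝ) + α)

section FracLap

variable {d : ℕ} {α : ℝ} {φ : EuclideanSpace ℝ (Fin d) → ℝ} {x : EuclideanSpace ℝ (Fin d)}

theorem fracLapIntegrable_of_holderWith {β C : ℝ≥0} {B : ℝ} (hφ : HolderWith C β φ)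
    (hB : ∀ y, |φ y| ≤ B) (hd : 1 ≤ d) (hα : 0 < α) (hαβ : α < β) :
    FracLapIntegrable d α φ x := by
  have : Nonempty (Fin d) := Fin.pos_iff_nonempty.mp hd
  have hβ : 0 < β := NNReal.coe_pos.mp (hα.trans hαβ)
  have increment_bounded (z) : |φ x - φ (x + z)| ≤ B + B :=
    (abs_sub _ _).trans (add_le_add (hB x) (hB (x + z)))
  have increment_holder (z) : |φ x - φ (x + z)| ≤ C * ‖z‖ ^ (β : ℝ) := by
    simpa only [Real.dist_eq, dist_self_add_right] using hφ.dist_le x (x + z)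
  have increment_continuous : Continuous fun z => φ x - φ (x + z) := by
    have := hφ.continuous hβ
    fun_prop
  exact integrable_div_norm_rpow (by simpa using hα) (by simpa using hαβ)
    increment_continuous.aestronglyMeasurable increment_bounded increment_holder

namespace FracLapIntegrable

theorem aestronglyMeasurable_comp_add (hφ : FracLapIntegrable d α φ x) :
    AEStronglyMeasurable fun z => φ (x + z) := by
  have value_recovered (z : EuclideanSpace ℝ (Fin d)) :
      φ x - (φ x - φ (x + z)) / ‖z‖ ^ ((d : ℝ) + α) * ‖z‖ ^ ((d : ℝ) + α) = φ (x + z) := by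
    rcases eq_or_ne z 0 with rfl | hz
    · simp
    · rw [div_mul_cancel₀ _ (rpow_pos_of_pos (norm_pos_iff.mpr hz) _).ne', sub_sub_cancel]
  exact (aestronglyMeasurable_const.sub (hφ.aestronglyMeasurable.mul
    (measurable_norm.pow_const _).aestronglyMeasurable)).congr (.of_forall value_recovered)

theorem comp_lipschitzWith {Φ : ℝ → ℝ} {K : ℝ≥0} (hφ : FracLapIntegrable d α φ x)
    (hΦ : LipschitzWith K Φ) : FracLapIntegrable d α (fun y => Φ (φ y)) x := by
  refine (hφ.norm.const_mul (K : ℝ)).mono' ?_ (.of_forall fun z => ?_)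
  · exact (aestronglyMeasurable_const.sub (hΦ.continuous.comp_aestronglyMeasurable
      hφ.aestronglyMeasurable_comp_add)).div₀ (measurable_norm.pow_const _).aestronglyMeasurable
  · rw [norm_div, norm_div, ← mul_div_assoc]
    gcongr
    exact hΦ.dist_le_mul (φ x) (φ (x + z))

end FracLapIntegrable

theorem fracLap_comp_le_mul_of_subgradient {Φ : ℝ → ℝ} {p : ℝ} (hφ : FracLapIntegrable d α φ x)
    (hΦφ : FracLapIntegrable d α (fun y => Φ (φ y)) x)
    (hp : ∀ t, Φ (φ x) + p * (t - φ x) ≤ Φ t) :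
    fracLap d α (fun y => Φ (φ y)) x ≤ p * fracLap d α φ x := by
  unfold fracLap
  rw [← integral_const_mul]
  refine integral_mono hΦφ (hφ.const_mul p) fun z => ?_
  have increment_le : Φ (φ x) - Φ (φ (x + z)) ≤ p * (φ x - φ (x + z)) := by
    linarith [hp (φ (x + z))]
  calc (Φ (φ x) - Φ (φ (x + z))) / ‖z‖ ^ ((d : ℝ) + α)
      ≤ p * (φ x - φ (x + z)) / ‖z‖ ^ ((d : ℝ) + α) := by gcongr
    _ = p * ((φ x - φ (x + z)) / ‖z‖ ^ ((d : ℝ) + α)) := mul_div_assoc _ _ _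

end FracLap

theorem abs_add_sign_mul_sub_le_abs (a b : ℝ) : |a| + Real.sign a * (b - a) ≤ |b| := by
  rcases lt_trichotomy a 0 with ha | rfl | ha
  · rw [Real.sign_of_neg ha, abs_of_neg ha]
    linarith [neg_le_abs b]
  · simp
  · rw [Real.sign_of_pos ha, abs_of_pos ha]
    linarith [le_abs_self b]

theorem fracLap_kato_inequality_general {d : ℕ} {α : ℝ} {u : EuclideanSpace ℝ (Fin d) → ℝ}
    {x : EuclideanSpace ℝ (Fin d)} (hu : FracLapIntegrable d α u x) (v : ℝ) :
    FracLapIntegrable d α (fun y => |u y - v|) x ∧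
      fracLap d α (fun y => |u y - v|) x ≤ Real.sign (u x - v) * fracLap d α u x := by
  have habs : FracLapIntegrable d α (fun y => |u y - v|) x :=
    hu.comp_lipschitzWith (LipschitzWith.dist_left v)
  refine ⟨habs, fracLap_comp_le_mul_of_subgradient (Φ := fun t => |t - v|) hu habs fun t => ?_⟩
  simpa only [sub_sub_sub_cancel_right] using abs_add_sign_mul_sub_le_abs (u x - v) (t - v)

/-- Kato-type inequality: for `α ∈ (0,1)`, `u : ℝ^d → ℝ` bounded
Lipschitz and `v ∈ ℝ`, the function `x ↦ |u(x) - v|` is bounded and Lipschitz, and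
`L(|u - v|)(x) ≤ sgn(u(x) - v) · Lu(x)` for every `x`, where `sgn` is `Real.sign`. -/
theorem fracLap_kato_inequality
    (d : ℕ) (hd : 1 ≤ d) (α : ℝ) (hα : α ∈ Set.Ioo (0 : ℝ) 1)
    (u : EuclideanSpace ℝ (Fin d) → ℝ)
    (hubd : ∃ B : ℝ, ∀ x, |u x| ≤ B) (huLip : ∃ M : NNReal, LipschitzWith M u)
    (v : ℝ) :
    (∃ B : ℝ, ∀ x, |(|u x - v|)| ≤ B) ∧
    (∃ M : NNReal, LipschitzWith M (fun x => |u x - v|)) ∧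
    ∀ x : EuclideanSpace ℝ (Fin d),
      fracLap d α (fun y => |u y - v|) x ≤ Real.sign (u x - v) * fracLap d α u x := by
  obtain ⟨B, hB⟩ := hubd
  obtain ⟨M, hM⟩ := huLip
  refine ⟨⟨B + |v|, fun x => ?_⟩, ⟨1 * M, (LipschitzWith.dist_left v).comp hM⟩, fun x => ?_⟩
  · simpa only [abs_abs] using (abs_sub (u x) v).trans (add_le_add_left (hB x) |v|)
  · have hu : FracLapIntegrable d α u x :=
      fracLapIntegrable_of_holderWith hM.holderWith hB hd hα.1 hα.2
    exact (fracLap_kato_inequality_general hu v).2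
end
end

section
/- Let (X, λ) be a finite measure space such that L¹(X, λ) is separable. Let (ν^n) be a sequence of Young measures on X satisfying, for some p ≥ 1, sup_n ∫_X ∫_ℝ |ξ|^p dν^n_z(ξ) dλ(z) < +∞. Then there exist a Young measure ν on X and a subsequence (still denoted (ν^n)) such that for every h ∈ L¹(X, λ) and every bounded continuous φ : ℝ → ℝ, lim_{n→∞} ∫_X h(z) ∫_ℝ φ(ξ) dν^n_z(ξ) dλ(z) = ∫_X h(z) ∫_ℝ φ(ξ) dν_z(ξ) dλ(z). -/
/-!
Averaging the measures `ν n z` over `z` gives a tight sequence, by Markov's inequality for the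
moments. The countable family `ν` is measurable with respect to the σ-algebra generated by a single
map `T` into a Polish space `Y`, so integrals against `ν n` see an integrable `h` only through its
conditional expectation given `T`, which has the form `f ∘ T`. The laws of `(T z, ξ)` under
`ν n z (dξ) λ(dz)` on `Y × ℝ` are tight, since their first marginal does not vary with `n`.
Disintegrating a narrow limit point over `Y` gives the limit Young measure: convergence holds for
`f` bounded and continuous, hence for all integrable `f` by density in `L¹`.
A σ-finite `λ` is handled by passing to an equivalent probability measure dominated by a multiple
of `λ`.
-/

open MeasureTheory Filter
open scoped ENNReal Topology

noncomputable section

/-- A Young measure on a measurable space `X`: a measurable family of Borel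
probability measures on `ℝ` (measurability tested against bounded continuous
functions). -/
def IsYoungMeasure {X : Type*} [MeasurableSpace X] (ν : X → Measure ℝ) : Prop :=
  (∀ z, IsProbabilityMeasure (ν z)) ∧
  ∀ φ : BoundedContinuousFunction ℝ ℝ, Measurable fun z => ∫ ξ, φ ξ ∂(ν z)

open ProbabilityTheory
open scoped NNReal BoundedContinuousFunction

section Tightness

lemma isTightMeasureSet_of_lintegral_enorm_rpow_le {E : Type*} [NormedAddCommGroup E]
    [ProperSpace E] [MeasurableSpace E] [OpensMeasurableSpace E] {S : Set (Measure E)}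
    {p : ℝ} (hp : 0 < p) {C : ℝ≥0∞} (hC : C ≠ ⊤) (hS : ∀ μ ∈ S, ∫⁻ x, ‖x‖ₑ ^ p ∂μ ≤ C) :
    IsTightMeasureSet S := by
  have hlim : Tendsto (fun r : ℝ => C / ENNReal.ofReal r ^ p) atTop (𝓝 0) := by
    simpa using ENNReal.Tendsto.const_div
      ((ENNReal.tendsto_rpow_at_top hp).comp ENNReal.tendsto_ofReal_atTop) (Or.inr hC)
  refine isTightMeasureSet_of_tendsto_measure_norm_gt <|
    tendsto_of_tendsto_of_tendsto_of_le_of_le' tendsto_const_nhds hlim (by simp) ?_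
  filter_upwards [eventually_gt_atTop 0] with r hr
  refine iSup₂_le fun μ hμ => ?_
  calc μ {x | r < ‖x‖}
      ≤ μ {x | ENNReal.ofReal r ^ p ≤ ‖x‖ₑ ^ p} := measure_mono fun x hx => by
        have : ENNReal.ofReal r ≤ ‖x‖ₑ := by
          rw [← ofReal_norm]; exact ENNReal.ofReal_le_ofReal (le_of_lt hx)
        exact ENNReal.rpow_le_rpow this hp.le
    _ ≤ (∫⁻ x, ‖x‖ₑ ^ p ∂μ) / ENNReal.ofReal r ^ p :=
        meas_ge_le_lintegral_div (by fun_prop) (by simp [hr]) (by simp [hp.le])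
    _ ≤ C / ENNReal.ofReal r ^ p := by gcongr; exact hS μ hμ

lemma isTightMeasureSet_range_of_le_smul {E ι : Type*} [TopologicalSpace E] [MeasurableSpace E]
    {μ ν : ι → Measure E} {c : ℝ≥0∞} (hc : c ≠ ⊤) (hν : ∀ i, ν i ≤ c • μ i)
    (hμ : IsTightMeasureSet (Set.range μ)) : IsTightMeasureSet (Set.range ν) := by
  rw [isTightMeasureSet_iff_exists_isCompact_measure_compl_le] at hμ ⊢
  intro ε hε
  obtain ⟨K, hK, hμK⟩ := hμ (ε / c) (ENNReal.div_pos hε.ne' hc)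
  refine ⟨K, hK, Set.forall_mem_range.2 fun i => ?_⟩
  calc ν i Kᶜ ≤ c * μ i Kᶜ := hν i Kᶜ
    _ ≤ c * (ε / c) := by gcongr; exact hμK _ ⟨i, rfl⟩
    _ ≤ ε := ENNReal.mul_div_le

lemma exists_tendsto_subseq_of_fst_eq {Y E : Type*}
    [TopologicalSpace Y] [PolishSpace Y] [MeasurableSpace Y] [BorelSpace Y]
    [TopologicalSpace E] [PolishSpace E] [MeasurableSpace E] [BorelSpace E]
    {m : Measure Y} {ρ : ℕ → ProbabilityMeasure (Y × E)}
    (hfst : ∀ n, (ρ n : Measure (Y × E)).fst = m)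
    (hsnd : IsTightMeasureSet (Set.range fun n => (ρ n : Measure (Y × E)).snd)) :
    ∃ (ρ' : ProbabilityMeasure (Y × E)) (s : ℕ → ℕ), StrictMono s ∧
      Tendsto (ρ ∘ s) atTop (𝓝 ρ') ∧ (ρ' : Measure (Y × E)).fst = m := by
  let fst (π : ProbabilityMeasure (Y × E)) : ProbabilityMeasure Y :=
    π.map continuous_fst.aemeasurable
  have fst_eq (n : ℕ) : fst (ρ n) = fst (ρ 0) := Subtype.ext ((hfst n).trans (hfst 0).symm)
  have htight : IsTightMeasureSet {(π : Measure (Y × E)) | π ∈ Set.range ρ} := by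
    refine .prodMk ((isTightMeasureSet_singleton (μ := (fst (ρ 0) : Measure Y))).subset ?_)
      (hsnd.subset ?_)
    · rintro _ ⟨_, ⟨_, ⟨n, rfl⟩, rfl⟩, rfl⟩
      exact (hfst n).trans (hfst 0).symm
    · rintro _ ⟨_, ⟨_, ⟨n, rfl⟩, rfl⟩, rfl⟩
      exact ⟨n, rfl⟩
  obtain ⟨ρ', -, s, hs, hlim⟩ := (isCompact_closure_of_isTightMeasureSet htight).tendsto_subseq
    fun n => subset_closure (Set.mem_range_self n)
  refine ⟨ρ', s, hs, hlim, ?_⟩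
  have hfst' : Tendsto (fun _ : ℕ => fst (ρ 0)) atTop (𝓝 (fst ρ')) :=
    (((ProbabilityMeasure.continuous_map continuous_fst).tendsto ρ').comp hlim).congr
      fun n => fst_eq (s n)
  exact (congrArg (fun π : ProbabilityMeasure Y => (π : Measure Y))
    (tendsto_nhds_unique hfst' tendsto_const_nhds)).trans (hfst 0)

end Tightness

lemma exists_isPiSystem_range_generateFrom_eq (α : Type*) [m : MeasurableSpace α]
    [MeasurableSpace.CountablyGenerated α] :
    ∃ A : ℕ → Set α, IsPiSystem (Set.range A) ∧ MeasurableSpace.generateFrom (Set.range A) = m := by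
  let 𝒜 := generateSetAlgebra (MeasurableSpace.countableGeneratingSet α)
  have h𝒜 : IsSetAlgebra 𝒜 := isSetAlgebra_generateSetAlgebra
  obtain ⟨A, hA⟩ := (countable_generateSetAlgebra
    (MeasurableSpace.countable_countableGeneratingSet (α := α))).exists_eq_range ⟨∅, h𝒜.empty_mem⟩
  refine ⟨A, hA ▸ fun s hs t ht _ => h𝒜.inter_mem hs ht, ?_⟩
  rw [← hA, generateFrom_generateSetAlgebra_eq,
    MeasurableSpace.generateFrom_countableGeneratingSet]

lemma exists_isProbabilityMeasure_le_smul {X : Type*} [MeasurableSpace X] (μ : Measure X)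
    [SigmaFinite μ] [NeZero μ] :
    ∃ P : Measure X, IsProbabilityMeasure P ∧ μ ≪ P ∧ ∃ c : ℝ≥0∞, c ≠ ⊤ ∧ P ≤ c • μ := by
  obtain ⟨w, hw_pos, hw, hw_lt⟩ := exists_pos_lintegral_lt_of_sigmaFinite μ one_ne_zero
  let Q : Measure X := μ.withDensity fun x => min (w x : ℝ≥0∞) 1
  have hQ_le : Q ≤ μ := by
    simpa using withDensity_mono (μ := μ) (ae_of_all μ fun x => min_le_right (w x : ℝ≥0∞) 1)
  have hμQ : μ ≪ Q := withDensity_absolutelyContinuous' (by fun_prop) <|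
    ae_of_all _ fun x => by simp [(hw_pos x).ne']
  have : IsFiniteMeasure Q := isFiniteMeasure_withDensity <|
    ((lintegral_mono fun x => min_le_left _ _).trans_lt hw_lt).ne_top
  have : NeZero Q := ⟨fun hQ => NeZero.ne μ (Measure.absolutelyContinuous_zero_iff.1 (hQ ▸ hμQ))⟩
  have hc : (Q Set.univ)⁻¹ ≠ ⊤ := by simp [NeZero.ne Q]
  exact ⟨(Q Set.univ)⁻¹ • Q, inferInstance,
    hμQ.trans (Measure.absolutelyContinuous_smul (by simp)), _, hc, by gcongr⟩

lemma comp_measure_mono {X E : Type*} [MeasurableSpace X] [MeasurableSpace E] (κ : Kernel X E)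
    {μ ν : Measure X} (h : μ ≤ ν) : κ ∘ₘ μ ≤ κ ∘ₘ ν :=
  Measure.le_iff.2 fun s hs => by
    rw [Measure.bind_apply hs κ.aemeasurable, Measure.bind_apply hs κ.aemeasurable]
    exact lintegral_mono' h le_rfl

lemma exists_measurable_forall_measurable_comap {X E ι : Type*} [MeasurableSpace X]
    [MeasurableSpace E] [MeasurableSpace.CountablyGenerated E]
    (κ : ι → Kernel X E) [∀ i, IsMarkovKernel (κ i)] :
    ∃ T : X → ι → ℕ → ℝ≥0∞, Measurable T ∧
      ∀ i, Measurable[MeasurableSpace.comap T inferInstance] (κ i) := by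
  obtain ⟨A, hA_pi, hA_gen⟩ := exists_isPiSystem_range_generateFrom_eq E
  have hA n : MeasurableSet (A n) := hA_gen ▸ MeasurableSpace.measurableSet_generateFrom ⟨n, rfl⟩
  let T : X → ι → ℕ → ℝ≥0∞ := fun x i n => κ i x (A n)
  refine ⟨T, measurable_pi_lambda _ fun i => measurable_pi_lambda _ fun n =>
    (κ i).measurable_coe (hA n), fun i => ?_⟩
  refine .measure_of_isPiSystem_of_isProbabilityMeasure hA_gen.symm hA_pi ?_
  rintro _ ⟨n, rfl⟩
  exact (measurable_pi_apply n).comp ((measurable_pi_apply i).comp (comap_measurable T))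

section Law

variable {X Y E : Type*} [MeasurableSpace X] [MeasurableSpace Y] [MeasurableSpace E]
  {T : X → Y} {κ : Kernel X E} {μ : Measure X}

/-- The law of `(T x, y)` when `x` has law `μ` and `y` has law `κ x` given `x`; it records `κ`
relative to the σ-algebra generated by `T`. -/
def jointLaw (μ : Measure X) (T : X → Y) (κ : Kernel X E) : Measure (Y × E) :=
  (μ ⊗ₘ κ).map (Prod.map T id)

lemma isProbabilityMeasure_jointLaw [IsProbabilityMeasure μ] [IsMarkovKernel κ]
    (hT : Measurable T) : IsProbabilityMeasure (jointLaw μ T κ) :=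
  Measure.isProbabilityMeasure_map (by fun_prop)

lemma fst_jointLaw [SFinite μ] [IsMarkovKernel κ] (hT : Measurable T) :
    (jointLaw μ T κ).fst = μ.map T := by
  calc (jointLaw μ T κ).fst = (μ ⊗ₘ κ).map (T ∘ Prod.fst) :=
        Measure.map_map measurable_fst (by fun_prop)
    _ = (μ ⊗ₘ κ).fst.map T := (Measure.map_map hT measurable_fst).symm
    _ = μ.map T := by rw [Measure.fst_compProd]

lemma snd_jointLaw [SFinite μ] [IsSFiniteKernel κ] (hT : Measurable T) :
    (jointLaw μ T κ).snd = κ ∘ₘ μ :=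
  (Measure.map_map measurable_snd (by fun_prop)).trans (Measure.snd_compProd μ κ)

lemma jointLaw_comap [SFinite μ] (hT : Measurable T) (η : Kernel Y E) [IsSFiniteKernel η] :
    jointLaw μ T (η.comap T hT) = μ.map T ⊗ₘ η := by
  ext s hs
  rw [jointLaw, Measure.map_apply (by fun_prop) hs,
    Measure.compProd_apply (hs.preimage (by fun_prop)), Measure.compProd_apply hs,
    lintegral_map (Kernel.measurable_kernel_prodMk_left hs) hT]
  rfl

lemma integral_jointLaw [SFinite μ] [IsSFiniteKernel κ] (hT : Measurable T)
    {g : Y → ℝ} {φ : E → ℝ} (h : Integrable (fun q : Y × E => g q.1 * φ q.2) (jointLaw μ T κ)) :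
    ∫ q, g q.1 * φ q.2 ∂jointLaw μ T κ = ∫ x, g (T x) * ∫ y, φ y ∂κ x ∂μ := by
  have hT' : Measurable (Prod.map T (id : E → E)) := by fun_prop
  calc ∫ q, g q.1 * φ q.2 ∂jointLaw μ T κ = ∫ q, g (T q.1) * φ q.2 ∂(μ ⊗ₘ κ) :=
        integral_map hT'.aemeasurable h.1
    _ = ∫ x, ∫ y, g (T x) * φ y ∂κ x ∂μ := Measure.integral_compProd (h.comp_measurable hT')
    _ = ∫ x, g (T x) * ∫ y, φ y ∂κ x ∂μ := by simp only [integral_const_mul]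

end Law

section IntegralMul

variable {X : Type*} [MeasurableSpace X] {μ : Measure X} {h : X → ℝ} {C : ℝ≥0}

lemma dist_integral_mul_le {g ψ : X → ℝ} (hh : Integrable h μ) (hg : Integrable g μ)
    (hψ : AEStronglyMeasurable ψ μ) (hψC : ∀ x, ‖ψ x‖ ≤ C) :
    dist (∫ x, h x * ψ x ∂μ) (∫ x, g x * ψ x ∂μ) ≤ C * ∫ x, ‖h x - g x‖ ∂μ := by
  have hψC' : ∀ᵐ x ∂μ, ‖ψ x‖ ≤ C := ae_of_all _ hψC
  calc dist (∫ x, h x * ψ x ∂μ) (∫ x, g x * ψ x ∂μ)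
      = ‖∫ x, (h x - g x) * ψ x ∂μ‖ := by
        simp only [dist_eq_norm, sub_mul,
          integral_sub (hh.mul_bdd hψ hψC') (hg.mul_bdd hψ hψC')]
    _ ≤ ∫ x, C * ‖h x - g x‖ ∂μ :=
        norm_integral_le_of_norm_le ((hh.sub hg).norm.const_mul _) <| ae_of_all _ fun x => by
          rw [norm_mul, mul_comm]
          gcongr
          exact hψC x
    _ = C * ∫ x, ‖h x - g x‖ ∂μ := integral_const_mul _ _

lemma tendsto_integral_mul_of_forall_exists_approx {ι : Type*} {l : Filter ι} {ψs : ι → X → ℝ}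
    {ψ : X → ℝ} (hh : Integrable h μ)
    (hψs : ∀ i, AEStronglyMeasurable (ψs i) μ) (hψsC : ∀ i x, ‖ψs i x‖ ≤ C)
    (hψ : AEStronglyMeasurable ψ μ) (hψC : ∀ x, ‖ψ x‖ ≤ C)
    (happrox : ∀ ε > 0, ∃ g, Integrable g μ ∧ ∫ x, ‖h x - g x‖ ∂μ ≤ ε ∧
      Tendsto (fun i => ∫ x, g x * ψs i x ∂μ) l (𝓝 (∫ x, g x * ψ x ∂μ))) :
    Tendsto (fun i => ∫ x, h x * ψs i x ∂μ) l (𝓝 (∫ x, h x * ψ x ∂μ)) := by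
  refine Metric.tendsto_nhds.2 fun ε hε => ?_
  obtain ⟨δ, hδ, hCδ⟩ := exists_pos_mul_lt (by positivity : 0 < ε / 3) (C : ℝ)
  obtain ⟨g, hg, hhg, hlim⟩ := happrox δ hδ
  have hclose {χ : X → ℝ} (hχ : AEStronglyMeasurable χ μ) (hχC : ∀ x, ‖χ x‖ ≤ C) :
      dist (∫ x, h x * χ x ∂μ) (∫ x, g x * χ x ∂μ) < ε / 3 :=
    (dist_integral_mul_le hh hg hχ hχC).trans_lt <| lt_of_le_of_lt (by gcongr) hCδ
  filter_upwards [Metric.tendsto_nhds.1 hlim (ε / 3) (by positivity)] with i hi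
  have htri := dist_triangle4_right (∫ x, h x * ψs i x ∂μ) (∫ x, h x * ψ x ∂μ)
    (∫ x, g x * ψs i x ∂μ) (∫ x, g x * ψ x ∂μ)
  linarith [hclose (hψs i) (hψsC i), hclose hψ hψC]

lemma exists_integrable_map_forall_integral_comp_mul_eq {Y : Type*} [mY : MeasurableSpace Y]
    [IsFiniteMeasure μ] {T : X → Y} (hT : Measurable T) (hh : Integrable h μ) :
    ∃ f : Y → ℝ, Integrable f (μ.map T) ∧ ∀ ψ : X → ℝ, StronglyMeasurable[mY.comap T] ψ →
      Integrable (h * ψ) μ → ∫ x, h x * ψ x ∂μ = ∫ x, f (T x) * ψ x ∂μ := by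
  obtain ⟨f, hf, hfT⟩ := (stronglyMeasurable_condExp (μ := μ) (f := h)
    (m := mY.comap T)).exists_eq_measurable_comp
  refine ⟨f, ?_, fun ψ hψ hhψ => ?_⟩
  · rw [integrable_map_measure hf.aestronglyMeasurable hT.aemeasurable, ← hfT]
    exact integrable_condExp
  · calc ∫ x, h x * ψ x ∂μ = ∫ x, (μ[h * ψ|mY.comap T]) x ∂μ :=
          (integral_condExp hT.comap_le).symm
      _ = ∫ x, (μ[h|mY.comap T]) x * ψ x ∂μ :=
          integral_congr_ae (condExp_mul_of_stronglyMeasurable_right hψ hhψ hh)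
      _ = ∫ x, f (T x) * ψ x ∂μ := by rw [hfT]; rfl

lemma tendsto_integral_mul_of_stronglyMeasurable_comap {Y ι : Type*} [TopologicalSpace Y]
    [TopologicalSpace.PseudoMetrizableSpace Y] [mY : MeasurableSpace Y] [BorelSpace Y]
    [IsFiniteMeasure μ] {T : X → Y}
    (hT : Measurable T) {l : Filter ι} {ψs : ι → X → ℝ} {ψ : X → ℝ}
    (hψs : ∀ i, StronglyMeasurable[mY.comap T] (ψs i)) (hψsC : ∀ i x, ‖ψs i x‖ ≤ C)
    (hψ : StronglyMeasurable[mY.comap T] ψ) (hψC : ∀ x, ‖ψ x‖ ≤ C)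
    (hlim : ∀ g : Y →ᵇ ℝ,
      Tendsto (fun i => ∫ x, g (T x) * ψs i x ∂μ) l (𝓝 (∫ x, g (T x) * ψ x ∂μ)))
    (hh : Integrable h μ) :
    Tendsto (fun i => ∫ x, h x * ψs i x ∂μ) l (𝓝 (∫ x, h x * ψ x ∂μ)) := by
  have hψs' i := ((hψs i).mono hT.comap_le).aestronglyMeasurable (μ := μ)
  have hψ' := (hψ.mono hT.comap_le).aestronglyMeasurable (μ := μ)
  obtain ⟨f, hf, hhf⟩ := exists_integrable_map_forall_integral_comp_mul_eq hT hh
  simp only [hhf _ (hψs _) (hh.mul_bdd (hψs' _) (ae_of_all _ (hψsC _))),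
    hhf _ hψ (hh.mul_bdd hψ' (ae_of_all _ hψC))]
  refine tendsto_integral_mul_of_forall_exists_approx (hf.comp_measurable hT) hψs' hψsC hψ' hψC
    fun ε hε => ?_
  obtain ⟨g, hfg, hg⟩ := hf.exists_boundedContinuous_integral_sub_le hε
  refine ⟨g ∘ T, hg.comp_measurable hT, ?_, hlim g⟩
  exact (integral_map hT.aemeasurable (hf.sub hg).norm.aestronglyMeasurable).symm.trans_le hfg

end IntegralMul

lemma measurable_of_forall_measurable_integral {X E : Type*} [MeasurableSpace X]
    [TopologicalSpace E] [HasOuterApproxClosed E] [MeasurableSpace E] [BorelSpace E]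
    {ν : X → Measure E} [∀ x, IsProbabilityMeasure (ν x)]
    (hν : ∀ φ : E →ᵇ ℝ, Measurable fun x => ∫ y, φ y ∂ν x) : Measurable ν := by
  refine .measure_of_isPiSystem_of_isProbabilityMeasure
    (BorelSpace.measurable_eq.trans borel_eq_generateFrom_isClosed) isPiSystem_isClosed
    fun F (hF : IsClosed F) => ?_
  refine measurable_of_tendsto_metrizable (f := fun n x => ∫⁻ y, hF.apprSeq n y ∂ν x) (fun n => ?_)
    (tendsto_pi_nhds.2 fun x => HasOuterApproxClosed.tendsto_lintegral_apprSeq hF (ν x))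
  let φ : E →ᵇ ℝ := (hF.apprSeq n).comp _ NNReal.isometry_coe.lipschitz
  have hφ x : ∫⁻ y, hF.apprSeq n y ∂ν x = ENNReal.ofReal (∫ y, φ y ∂ν x) :=
    lintegral_coe_eq_integral _ (φ.integrable (ν x))
  simpa only [hφ] using (hν φ).ennreal_ofReal

lemma stronglyMeasurable_integral_boundedContinuous {X E : Type*} {mX : MeasurableSpace X}
    [TopologicalSpace E] [MeasurableSpace E] [OpensMeasurableSpace E]
    {ν : X → Measure E} [∀ x, IsProbabilityMeasure (ν x)] (hν : Measurable ν) (φ : E →ᵇ ℝ) :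
    StronglyMeasurable fun x => ∫ y, φ y ∂ν x :=
  have : IsMarkovKernel (⟨ν, hν⟩ : Kernel X E) := ⟨‹_›⟩
  φ.continuous.stronglyMeasurable.integral_kernel (κ := ⟨ν, hν⟩)

section StableConvergence

variable {X E ι : Type*} [MeasurableSpace X] [TopologicalSpace E] [MeasurableSpace E]
  {μ : Measure X} {κ : ι → X → Measure E} {η : X → Measure E} {l : Filter ι}

/-- Stable (or narrow) convergence over `μ` of measure-valued maps on `X`, i.e. convergence as
functionals on `L¹(μ) × C_b(E)`. The maps are bare functions, so the notion is meaningful only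
when they are measurable. -/
def StableTendsto (μ : Measure X) (κ : ι → X → Measure E) (l : Filter ι) (η : X → Measure E) :
    Prop :=
  ∀ h : X → ℝ, Integrable h μ → ∀ φ : E →ᵇ ℝ,
    Tendsto (fun i => ∫ x, h x * ∫ y, φ y ∂κ i x ∂μ) l (𝓝 (∫ x, h x * ∫ y, φ y ∂η x ∂μ))

lemma StableTendsto.of_absolutelyContinuous {P : Measure X} [SigmaFinite μ] [SigmaFinite P]
    (h : StableTendsto P κ l η) (hμP : μ ≪ P) : StableTendsto μ κ l η := by
  intro f hf φ
  simpa only [smul_mul_assoc, integral_rnDeriv_smul hμP] using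
    h _ ((integrable_rnDeriv_smul_iff hμP).2 hf) φ

lemma stableTendsto_of_measurable_comap [OpensMeasurableSpace E] {Y : Type*} [TopologicalSpace Y]
    [TopologicalSpace.PseudoMetrizableSpace Y] [mY : MeasurableSpace Y] [BorelSpace Y]
    [IsFiniteMeasure μ] {T : X → Y}
    (hT : Measurable T) [∀ i x, IsProbabilityMeasure (κ i x)] [∀ x, IsProbabilityMeasure (η x)]
    (hκ : ∀ i, Measurable[mY.comap T] (κ i)) (hη : Measurable[mY.comap T] η)
    (hlim : ∀ (g : Y →ᵇ ℝ) (φ : E →ᵇ ℝ), Tendsto (fun i => ∫ x, g (T x) * ∫ y, φ y ∂κ i x ∂μ) l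
      (𝓝 (∫ x, g (T x) * ∫ y, φ y ∂η x ∂μ))) :
    StableTendsto μ κ l η := fun _ hh φ =>
  tendsto_integral_mul_of_stronglyMeasurable_comap (C := ‖φ‖₊) hT
    (fun i => stronglyMeasurable_integral_boundedContinuous (hκ i) φ)
    (fun i x => φ.norm_integral_le_norm (κ i x))
    (stronglyMeasurable_integral_boundedContinuous hη φ)
    (fun x => φ.norm_integral_le_norm (η x)) (fun g => hlim g φ) hh

end StableConvergence

section Compactness

variable {X E : Type*} [MeasurableSpace X]
  [TopologicalSpace E] [PolishSpace E] [MeasurableSpace E] [BorelSpace E]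

lemma exists_subseq_tendsto_integral_comp_mul {Y : Type*}
    [TopologicalSpace Y] [PolishSpace Y] [MeasurableSpace Y] [BorelSpace Y]
    {P : Measure X} [IsProbabilityMeasure P] {T : X → Y} (hT : Measurable T)
    (κ : ℕ → Kernel X E) [∀ n, IsMarkovKernel (κ n)]
    (hκ : IsTightMeasureSet (Set.range fun n => κ n ∘ₘ P)) :
    ∃ (η : Kernel Y E) (s : ℕ → ℕ), IsMarkovKernel η ∧ StrictMono s ∧
      ∀ (g : Y →ᵇ ℝ) (φ : E →ᵇ ℝ),
        Tendsto (fun n => ∫ x, g (T x) * ∫ y, φ y ∂κ (s n) x ∂P) atTop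
          (𝓝 (∫ x, g (T x) * ∫ y, φ y ∂η (T x) ∂P)) := by
  have : Nonempty E := nonempty_of_isProbabilityMeasure (κ 0 ∘ₘ P)
  let ρ n : ProbabilityMeasure (Y × E) := ⟨jointLaw P T (κ n), isProbabilityMeasure_jointLaw hT⟩
  obtain ⟨ρ', s, hs, hlim, hρ'_fst⟩ := exists_tendsto_subseq_of_fst_eq (ρ := ρ)
    (fun _ => fst_jointLaw hT)
    (by simpa only [ρ, ProbabilityMeasure.coe_mk, snd_jointLaw hT] using hκ)
  let η := (ρ' : Measure (Y × E)).condKernel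
  have hρ'_eq : (ρ' : Measure (Y × E)) = jointLaw P T (η.comap T hT) := by
    rw [jointLaw_comap, ← hρ'_fst]
    exact (Measure.disintegrate _ _).symm
  refine ⟨η, s, inferInstance, hs, fun g φ => ?_⟩
  let F : (Y × E) →ᵇ ℝ := g.compContinuous ⟨Prod.fst, continuous_fst⟩ *
    φ.compContinuous ⟨Prod.snd, continuous_snd⟩
  have hF (κ : Kernel X E) [IsMarkovKernel κ] :
      ∫ q, F q ∂jointLaw P T κ = ∫ x, g (T x) * ∫ y, φ y ∂κ x ∂P :=
    have := isProbabilityMeasure_jointLaw (μ := P) (κ := κ) hT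
    integral_jointLaw hT (F.integrable _)
  have := ProbabilityMeasure.tendsto_iff_forall_integral_tendsto.1 hlim F
  rw [hρ'_eq, hF] at this
  exact this.congr fun n => hF (κ (s n))

theorem exists_subseq_stableTendsto_of_isProbabilityMeasure {P : Measure X} [IsProbabilityMeasure P]
    (κ : ℕ → Kernel X E) [∀ n, IsMarkovKernel (κ n)]
    (hκ : IsTightMeasureSet (Set.range fun n => κ n ∘ₘ P)) :
    ∃ (η : Kernel X E) (s : ℕ → ℕ), IsMarkovKernel η ∧ StrictMono s ∧
      StableTendsto P (fun n => κ (s n)) atTop η := by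
  obtain ⟨T, hT, hκT⟩ := exists_measurable_forall_measurable_comap κ
  obtain ⟨η, s, hη, hs, hlim⟩ := exists_subseq_tendsto_integral_comp_mul hT κ hκ
  exact ⟨η.comap T hT, s, inferInstance, hs, stableTendsto_of_measurable_comap hT
    (fun n => hκT (s n)) (η.measurable.comp (comap_measurable T)) hlim⟩

theorem exists_subseq_stableTendsto {μ : Measure X} [SigmaFinite μ]
    (κ : ℕ → Kernel X E) [∀ n, IsMarkovKernel (κ n)]
    (hκ : IsTightMeasureSet (Set.range fun n => κ n ∘ₘ μ)) :
    ∃ (η : Kernel X E) (s : ℕ → ℕ), IsMarkovKernel η ∧ StrictMono s ∧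
      StableTendsto μ (fun n => κ (s n)) atTop η := by
  rcases eq_zero_or_neZero μ with rfl | _
  · exact ⟨κ 0, id, inferInstance, strictMono_id, by simp [StableTendsto]⟩
  obtain ⟨P, _, hμP, c, hc, hPμ⟩ := exists_isProbabilityMeasure_le_smul μ
  have hκP : IsTightMeasureSet (Set.range fun n => κ n ∘ₘ P) := by
    refine isTightMeasureSet_range_of_le_smul hc (fun n => ?_) hκ
    rw [← Measure.comp_smul]
    exact comp_measure_mono (κ n) hPμ
  obtain ⟨η, s, hη, hs, hlim⟩ := exists_subseq_stableTendsto_of_isProbabilityMeasure κ hκP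
  exact ⟨η, s, hη, hs, hlim.of_absolutelyContinuous hμP⟩

end Compactness

theorem youngMeasure_compactness_general {X : Type*} [MeasurableSpace X] (lam : Measure X)
    [SigmaFinite lam] (p : ℝ) (hp : 0 < p) (ν : ℕ → X → Measure ℝ)
    (hY : ∀ n, IsYoungMeasure (ν n))
    (hmom : ∃ C : ℝ≥0∞, C ≠ ⊤ ∧
      ∀ n, (∫⁻ z, (∫⁻ ξ, ENNReal.ofReal (|ξ| ^ p) ∂(ν n z)) ∂lam) ≤ C) :
    ∃ (νl : X → Measure ℝ) (s : ℕ → ℕ), IsYoungMeasure νl ∧ StrictMono s ∧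
      ∀ h : X → ℝ, Integrable h lam → ∀ φ : BoundedContinuousFunction ℝ ℝ,
        Tendsto (fun k => ∫ z, h z * ∫ ξ, φ ξ ∂(ν (s k) z) ∂lam) atTop
          (𝓝 (∫ z, h z * ∫ ξ, φ ξ ∂(νl z) ∂lam)) := by
  obtain ⟨C, hC, hmom⟩ := hmom
  have hprob n := (hY n).1
  let κ n : Kernel X ℝ := ⟨ν n, measurable_of_forall_measurable_integral (hY n).2⟩
  have (n : ℕ) : IsMarkovKernel (κ n) := ⟨hprob n⟩
  have hκ : IsTightMeasureSet (Set.range fun n => κ n ∘ₘ lam) := by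
    refine isTightMeasureSet_of_lintegral_enorm_rpow_le hp hC (Set.forall_mem_range.2 fun n => ?_)
    rw [Measure.lintegral_bind (κ n).aemeasurable (by fun_prop)]
    simpa only [κ, Kernel.coe_mk, Real.enorm_eq_ofReal_abs,
      ENNReal.ofReal_rpow_of_nonneg (abs_nonneg _) hp.le] using hmom n
  obtain ⟨η, s, hη, hs, hlim⟩ := exists_subseq_stableTendsto κ hκ
  exact ⟨η, s, ⟨fun z => inferInstance, fun φ =>
    (stronglyMeasurable_integral_boundedContinuous η.measurable φ).measurable⟩, hs, hlim⟩

/-- Compactness of Young measures: on a finite measure space with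
separable `L¹`, any sequence of Young measures with a uniform `p`-th moment bound
(`p ≥ 1`) admits a subsequence converging to a Young measure `ν`, in the sense that
`∫ h(z) ∫ φ dν^n_z dλ → ∫ h(z) ∫ φ dν_z dλ` for all `h ∈ L¹(X,λ)` and all bounded
continuous `φ`. -/
theorem youngMeasure_compactness
    {X : Type*} [MeasurableSpace X] (lam : Measure X) [IsFiniteMeasure lam]
    (hsep : TopologicalSpace.SeparableSpace (MeasureTheory.Lp ℝ 1 lam))
    (p : ℝ) (hp : 1 ≤ p) (ν : ℕ → X → Measure ℝ)
    (hY : ∀ n, IsYoungMeasure (ν n))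
    (hmom : ∃ C : ℝ≥0∞, C ≠ ⊤ ∧
      ∀ n, (∫⁻ z, (∫⁻ ξ, ENNReal.ofReal (|ξ| ^ p) ∂(ν n z)) ∂lam) ≤ C) :
    ∃ (νl : X → Measure ℝ) (s : ℕ → ℕ), IsYoungMeasure νl ∧ StrictMono s ∧
      ∀ h : X → ℝ, Integrable h lam → ∀ φ : BoundedContinuousFunction ℝ ℝ,
        Tendsto (fun k => ∫ z, h z * ∫ ξ, φ ξ ∂(ν (s k) z) ∂lam) atTop
          (𝓝 (∫ z, h z * ∫ ξ, φ ξ ∂(νl z) ∂lam)) :=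
  youngMeasure_compactness_general lam p (by linarith) ν hY hmom
end
end

section
/- Let (X, λ) be a finite measure space such that L¹(X, λ) is separable. Let (ν^n) be a sequence of Young measures on X satisfying, for some p ≥ 1, sup_n ∫_X ∫_ℝ |ξ|^p dν^n_z(ξ) dλ(z) < +∞, and define the associated kinetic functions f_n(z, ξ) = ν^n_z((ξ, +∞)). Then there exist a Young measure ν on X and a subsequence (still denoted (f_n)) such that f_n converges to the kinetic function f(z, ξ) = ν_z((ξ, +∞)) in the weak-* sense on X × ℝ: for every g ∈ L¹(X × ℝ, λ ⊗ Leb), lim_{n→∞} ∫_{X×ℝ} f_n(z,ξ) g(z,ξ) dλ(z) dξ = ∫_{X×ℝ} f(z,ξ) g(z,ξ) dλ(z) dξ. -/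
open MeasureTheory Filter Set
open scoped ENNReal Topology

noncomputable section

/-!
Through `1 - ν_z((ξ, ∞))`, a kinetic function is the family of distribution functions of the
`ν_z`, bounded by `1`. On a finite measure space bounded sequences are weak-* sequentially
compact, by weak compactness in `L²`, and σ-finite measures reduce to finite equivalent ones. It
remains to recognize a weak-* limit `U(z, ξ)` of distribution functions as a distribution function.
For almost every `z`, monotonicity passes to the limit, and tightness of the averages `∫ ν^n_z dλ`
prevents the loss of mass at `±∞`; the Stieltjes measure of `U(z, ·)` is the limiting Young measure,
and its distribution function agrees with `U(z, ·)` except at countably many points.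
-/

open ProbabilityTheory
open scoped NNReal InnerProductSpace

/- The closed span of the sequence is a separable Hilbert space, where sequential Banach–Alaoglu
applies; testing against `y` only sees the projection of `y` to that span. -/
theorem exists_subseq_tendsto_inner {𝕜 H : Type*} [RCLike 𝕜] [NormedAddCommGroup H]
    [InnerProductSpace 𝕜 H] [CompleteSpace H] {u : ℕ → H} {C : ℝ} (hu : ∀ n, ‖u n‖ ≤ C) :
    ∃ (x : H) (φ : ℕ → ℕ), StrictMono φ ∧
      ∀ y, Tendsto (fun n => ⟪u (φ n), y⟫_𝕜) atTop (𝓝 ⟪x, y⟫_𝕜) := by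
  let K : Submodule 𝕜 H := (Submodule.span 𝕜 (range u)).topologicalClosure
  have hK : IsClosed (K : Set H) := Submodule.isClosed_topologicalClosure _
  have : CompleteSpace K := hK.completeSpace_coe
  have : TopologicalSpace.SeparableSpace K :=
    ((countable_range u).isSeparable.span (R := 𝕜)).closure.separableSpace
  have hmem n : u n ∈ K := Submodule.le_topologicalClosure _ (Submodule.subset_span ⟨n, rfl⟩)
  let v : ℕ → K := fun n => ⟨u n, hmem n⟩
  obtain ⟨T, -, φ, hφ, hT⟩ := WeakDual.isSeqCompact_closedBall 𝕜 K 0 C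
    (x := fun n => StrongDual.toWeakDual (InnerProductSpace.toDual 𝕜 K (v n)))
    fun n => by simpa [v] using hu n
  refine ⟨(InnerProductSpace.toDual 𝕜 K).symm (WeakDual.toStrongDual T), φ, hφ, fun y => ?_⟩
  have hproj (w : K) : ⟪(w : H), y⟫_𝕜 = ⟪w, K.orthogonalProjectionOnto y⟫_𝕜 :=
    (Submodule.inner_orthogonalProjectionOnto_eq_of_mem_left w y).symm
  have hlim := ((WeakDual.eval_continuous (K.orthogonalProjectionOnto y)).tendsto T).comp hT
  rw [hproj, InnerProductSpace.toDual_symm_apply]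
  exact hlim.congr fun n => (hproj (v (φ n))).symm

section WeakStarConvergence

variable {Y : Type*} [MeasurableSpace Y] {μ ρ : Measure Y} {u v : ℕ → Y → ℝ} {f g : Y → ℝ}

/-- Weak-* convergence `u n → f` in `L^∞(μ)`, tested against `L¹(μ)`. The functions are not
quotiented by almost everywhere equality, so that they can be evaluated along sections. -/
structure TendstoWeakStar (μ : Measure Y) (u : ℕ → Y → ℝ) (f : Y → ℝ) : Prop where
  memLp : ∀ n, MemLp (u n) ∞ μ
  memLp_limit : MemLp f ∞ μ
  tendsto_integral : ∀ g, Integrable g μ →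
    Tendsto (fun n => ∫ y, u n y * g y ∂μ) atTop (𝓝 (∫ y, f y * g y ∂μ))

theorem memLp_top_mono_ac (h : MemLp f ∞ μ) (hρ : ρ ≪ μ) : MemLp f ∞ ρ := by
  refine ⟨h.1.mono_ac hρ, lt_of_le_of_lt ?_ h.2⟩
  simpa only [eLpNorm_exponent_top] using eLpNormEssSup_mono_measure f hρ

theorem integrableOn_of_memLp_top (hf : MemLp f ∞ μ) {s : Set Y} (hμs : μ s ≠ ∞) :
    IntegrableOn f s μ :=
  have : IsFiniteMeasure (μ.restrict s) := isFiniteMeasure_restrict.2 hμs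
  (hf.restrict s).integrable le_top

namespace TendstoWeakStar

theorem mono_ac [SigmaFinite μ] [SigmaFinite ρ] (h : TendstoWeakStar μ u f) (hρ : ρ ≪ μ) :
    TendstoWeakStar ρ u f where
  memLp n := memLp_top_mono_ac (h.memLp n) hρ
  memLp_limit := memLp_top_mono_ac h.memLp_limit hρ
  tendsto_integral g hg := by
    have hint (w : Y → ℝ) :
        ∫ y, w y * ((ρ.rnDeriv μ y).toReal • g y) ∂μ = ∫ y, w y * g y ∂ρ := by
      simp_rw [← integral_rnDeriv_smul hρ, smul_eq_mul, mul_left_comm]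
    simpa only [hint] using h.tendsto_integral _ ((integrable_rnDeriv_smul_iff hρ).2 hg)

theorem congr_limit (h : TendstoWeakStar μ u f) (hfg : f =ᵐ[μ] g) : TendstoWeakStar μ u g where
  memLp := h.memLp
  memLp_limit := (memLp_congr_ae hfg).1 h.memLp_limit
  tendsto_integral k hk := by
    have hint : ∫ y, f y * k y ∂μ = ∫ y, g y * k y ∂μ := integral_congr_ae (hfg.mul (.refl _ k))
    exact hint ▸ h.tendsto_integral k hk

theorem const (hf : MemLp f ∞ μ) : TendstoWeakStar μ (fun _ => f) f :=
  ⟨fun _ => hf, hf, fun _ _ => tendsto_const_nhds⟩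

theorem sub (hu : TendstoWeakStar μ u f) (hv : TendstoWeakStar μ v g) :
    TendstoWeakStar μ (fun n y => u n y - v n y) fun y => f y - g y where
  memLp n := (hu.memLp n).sub (hv.memLp n)
  memLp_limit := hu.memLp_limit.sub hv.memLp_limit
  tendsto_integral k hk := by
    have hint {w w' : Y → ℝ} (hw : MemLp w ∞ μ) (hw' : MemLp w' ∞ μ) :
        ∫ y, (w y - w' y) * k y ∂μ = ∫ y, w y * k y ∂μ - ∫ y, w' y * k y ∂μ := by
      simp only [sub_mul]
      exact integral_sub (hk.mul_of_top_right hw) (hk.mul_of_top_right hw')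
    simpa only [hint (hu.memLp _) (hv.memLp _), hint hu.memLp_limit hv.memLp_limit] using
      (hu.tendsto_integral k hk).sub (hv.tendsto_integral k hk)

theorem tendsto_setIntegral (h : TendstoWeakStar μ u f) {s : Set Y} (hs : MeasurableSet s)
    (hμs : μ s ≠ ∞) : Tendsto (fun n => ∫ y in s, u n y ∂μ) atTop (𝓝 (∫ y in s, f y ∂μ)) := by
  have hint (w : Y → ℝ) : ∫ y, w y * s.indicator (fun _ => 1) y ∂μ = ∫ y in s, w y ∂μ := by
    simp_rw [← integral_indicator hs, ← indicator_mul_right, mul_one]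
  simpa only [hint] using h.tendsto_integral _ ((integrable_indicator_iff hs).2
    (integrableOn_const hμs (C := 1)))

theorem ae_nonneg [SigmaFinite μ] (h : TendstoWeakStar μ u f) (hu : ∀ n, 0 ≤ᵐ[μ] u n) :
    0 ≤ᵐ[μ] f :=
  ae_nonneg_of_forall_setIntegral_nonneg_of_sigmaFinite
    (fun _ _ hμs => integrableOn_of_memLp_top h.memLp_limit hμs.ne)
    fun _ hs hμs => ge_of_tendsto' (h.tendsto_setIntegral hs hμs.ne)
      fun n => setIntegral_nonneg_of_ae (hu n)

theorem ae_le [SigmaFinite μ] (hu : TendstoWeakStar μ u f) (hv : TendstoWeakStar μ v g)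
    (huv : ∀ n, u n ≤ᵐ[μ] v n) : f ≤ᵐ[μ] g :=
  eventually_sub_nonneg.1 ((hv.sub hu).ae_nonneg fun n => eventually_sub_nonneg.2 (huv n))

theorem ae_le_of_mem [SigmaFinite μ] (hu : TendstoWeakStar μ u f) (hv : TendstoWeakStar μ v g)
    {s : Set Y} (hs : MeasurableSet s) (huv : ∀ n, ∀ y ∈ s, u n y ≤ v n y) :
    ∀ᵐ y ∂μ, y ∈ s → f y ≤ g y := by
  have hac : μ.restrict s ≪ μ := Measure.restrict_le_self.absolutelyContinuous
  exact (ae_restrict_iff' hs).1 ((hu.mono_ac hac).ae_le (hv.mono_ac hac) fun n =>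
    ae_restrict_of_forall_mem hs (huv n))

theorem lintegral_ofReal_le [SigmaFinite μ] (h : TendstoWeakStar μ u f)
    (hu : ∀ n, 0 ≤ᵐ[μ] u n) {c : ℝ≥0∞}
    (hc : ∀ n, ∫⁻ y, ENNReal.ofReal (u n y) ∂μ ≤ c) : ∫⁻ y, ENNReal.ofReal (f y) ∂μ ≤ c := by
  refine lintegral_le_of_forall_fin_meas_le c fun s hs hμs => ?_
  rw [← ofReal_integral_eq_lintegral_ofReal (integrableOn_of_memLp_top h.memLp_limit hμs)
    (ae_restrict_of_ae (h.ae_nonneg hu))]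
  refine le_of_tendsto' (ENNReal.tendsto_ofReal (h.tendsto_setIntegral hs hμs)) fun n => ?_
  rw [ofReal_integral_eq_lintegral_ofReal (integrableOn_of_memLp_top (h.memLp n) hμs)
    (ae_restrict_of_ae (hu n))]
  exact (setLIntegral_le_lintegral _ _).trans (hc n)

theorem comp_fst {Z : Type*} [MeasurableSpace Z] [SFinite μ] {τ : Measure Z} [SFinite τ]
    (h : TendstoWeakStar μ u f) :
    TendstoWeakStar (μ.prod τ) (fun n y => u n y.1) fun y => f y.1 := by
  have hfst {w : Y → ℝ} (hw : MemLp w ∞ μ) : MemLp (fun y => w y.1) ∞ (μ.prod τ) :=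
    (memLp_top_mono_ac hw Measure.quasiMeasurePreserving_fst.absolutelyContinuous).comp_of_map
      measurable_fst.aemeasurable
  refine ⟨fun n => hfst (h.memLp n), hfst h.memLp_limit, fun g hg => ?_⟩
  have hfubini {w : Y → ℝ} (hw : MemLp w ∞ μ) :
      ∫ y, w y.1 * g y ∂μ.prod τ = ∫ y, w y * ∫ z, g (y, z) ∂τ ∂μ := by
    rw [integral_prod (fun y => w y.1 * g y) (hg.mul_of_top_right (hfst hw))]
    simp only [integral_const_mul]
  simpa only [hfubini h.memLp_limit, hfubini (h.memLp _)] using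
    h.tendsto_integral _ hg.integral_prod_left

theorem comp_prodMk_right {Z : Type*} [MeasurableSpace Z] [MeasurableSingletonClass Z]
    [SigmaFinite μ] {τ : Measure Z} [SigmaFinite τ] {u : ℕ → Y × Z → ℝ} {f : Y × Z → ℝ}
    (h : TendstoWeakStar (μ.prod τ) u f) {a : Z} (ha : Measure.dirac a ≪ τ) :
    TendstoWeakStar μ (fun n y => u n (y, a)) fun y => f (y, a) := by
  have hac : μ.map (fun y => (y, a)) ≪ μ.prod τ :=
    Measure.prod_dirac (μ := μ) a ▸ Measure.AbsolutelyContinuous.rfl.prod ha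
  have hemb : MeasurableEmbedding fun y : Y => (y, a) :=
    MeasurableEmbedding.prodMk_right MeasurableEmbedding.id a
  have : SigmaFinite (μ.map fun y => (y, a)) := Measure.prod_dirac (μ := μ) a ▸ inferInstance
  have hmap := h.mono_ac hac
  have hcomp {w : Y × Z → ℝ} (hw : MemLp w ∞ (μ.map fun y => (y, a))) :
      MemLp (fun y => w (y, a)) ∞ μ :=
    (memLp_map_measure_iff hw.1 hemb.measurable.aemeasurable).1 hw
  refine ⟨fun n => hcomp (hmap.memLp n), hcomp hmap.memLp_limit, fun g hg => ?_⟩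
  simpa only [hemb.integral_map] using
    hmap.tendsto_integral (fun y => g y.1) (hemb.integrable_map_iff.2 hg)

end TendstoWeakStar

section MonotoneSections

variable {Z : Type*} [MeasurableSpace Z] [SigmaFinite μ] {τ : Measure Z} [SigmaFinite τ]
  {w : ℕ → Y × Z → ℝ} {U : Y × Z → ℝ}

theorem TendstoWeakStar.ae_monotone_comp [MeasurableSingletonClass Z] [Preorder Z] {ι : Type*}
    [Countable ι] [Preorder ι] {a : ι → Z} (h : TendstoWeakStar (μ.prod τ) w U)
    (hw : ∀ n y, Monotone fun x => w n (y, x)) (ha : Monotone a)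
    (hτ : ∀ i, Measure.dirac (a i) ≪ τ) : ∀ᵐ y ∂μ, Monotone fun i => U (y, a i) := by
  have hle (i j : ι) (hij : i ≤ j) : ∀ᵐ y ∂μ, U (y, a i) ≤ U (y, a j) :=
    (h.comp_prodMk_right (hτ i)).ae_le (h.comp_prodMk_right (hτ j)) fun n =>
      ae_of_all _ fun y => hw n y (ha hij)
  filter_upwards [ae_all_iff.2 fun i => ae_all_iff.2 fun j => ae_all_iff.2 (hle i j)] with y hy
  exact fun i j => hy i j

theorem TendstoWeakStar.ae_section_le [TopologicalSpace Z] [OpensMeasurableSpace Z]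
    [PartialOrder Z] [OrderClosedTopology Z] {a : Z} (h : TendstoWeakStar (μ.prod τ) w U)
    (hw : ∀ n y, Monotone fun x => w n (y, x)) (hτ : Measure.dirac a ≪ τ) :
    ∀ᵐ y ∂μ.prod τ, (a ≤ y.2 → U (y.1, a) ≤ U y) ∧ (y.2 ≤ a → U y ≤ U (y.1, a)) := by
  have hsec : TendstoWeakStar (μ.prod τ) (fun n y => w n (y.1, a)) fun y => U (y.1, a) :=
    (h.comp_prodMk_right hτ).comp_fst
  exact (hsec.ae_le_of_mem h (measurable_snd measurableSet_Ici) fun n y hy => hw n y.1 hy).and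
    (h.ae_le_of_mem hsec (measurable_snd measurableSet_Iic) fun n y hy => hw n y.1 hy)

end MonotoneSections

section Compactness

variable {C : ℝ}

theorem norm_integral_mul_le_of_ae_norm_le (hC : ∀ᵐ y ∂μ, ‖f y‖ ≤ C) (hg : Integrable g μ) :
    ‖∫ y, f y * g y ∂μ‖ ≤ C * ∫ y, ‖g y‖ ∂μ := by
  rw [← integral_const_mul]
  refine norm_integral_le_of_norm_le (hg.norm.const_mul C) ?_
  filter_upwards [hC] with y hy
  exact norm_mul_le_of_le hy le_rfl

theorem lipschitzWith_integral_mul (hf : AEStronglyMeasurable f μ)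
    (hC : ∀ᵐ y ∂μ, ‖f y‖ ≤ C) :
    LipschitzWith C.toNNReal fun g : Lp ℝ 1 μ => ∫ y, f y * g y ∂μ := by
  refine .of_dist_le' fun g k => ?_
  have hint (w : Lp ℝ 1 μ) : Integrable (fun y => f y * w y) μ :=
    (L1.integrable_coeFn w).bdd_mul hf hC
  rw [dist_eq_norm, ← integral_sub (hint g) (hint k), L1.dist_eq_integral_dist]
  simp_rw [← mul_sub, dist_eq_norm]
  exact norm_integral_mul_le_of_ae_norm_le hC
    ((L1.integrable_coeFn g).sub (L1.integrable_coeFn k))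

/- Indicators span a dense subspace of `L¹`, and the functionals `g ↦ ∫ u n * g` are uniformly
Lipschitz on `L¹`. -/
theorem tendstoWeakStar_of_tendsto_setIntegral (hu : ∀ n, AEStronglyMeasurable (u n) μ)
    (hC : ∀ n, ∀ᵐ y ∂μ, ‖u n y‖ ≤ C) (hf : AEStronglyMeasurable f μ)
    (hfC : ∀ᵐ y ∂μ, ‖f y‖ ≤ C)
    (h : ∀ s, MeasurableSet s → μ s < ∞ →
      Tendsto (fun n => ∫ y in s, u n y ∂μ) atTop (𝓝 (∫ y in s, f y ∂μ))) :
    TendstoWeakStar μ u f := by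
  have hmem n : MemLp (u n) ∞ μ := memLp_top_of_bound (hu n) C (hC n)
  have hmem_limit : MemLp f ∞ μ := memLp_top_of_bound hf C hfC
  refine ⟨hmem, hmem_limit, Integrable.induction (μ := μ)
    (fun g => Tendsto (fun n => ∫ y, u n y * g y ∂μ) atTop (𝓝 (∫ y, f y * g y ∂μ))) ?_ ?_ ?_ ?_⟩
  · intro c s hs hμs
    have hint (w : Y → ℝ) :
        ∫ y, w y * s.indicator (fun _ => c) y ∂μ = (∫ y in s, w y ∂μ) * c := by
      simp_rw [← indicator_mul_right, integral_indicator hs, integral_mul_const]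
    simpa only [hint] using (h s hs hμs).mul_const c
  · intro g k _ hg hk hg_lim hk_lim
    have hint {w : Y → ℝ} (hw : MemLp w ∞ μ) :
        ∫ y, w y * (g + k) y ∂μ = ∫ y, w y * g y ∂μ + ∫ y, w y * k y ∂μ := by
      simp only [Pi.add_apply, mul_add]
      exact integral_add (hg.mul_of_top_right hw) (hk.mul_of_top_right hw)
    simpa only [hint hmem_limit, hint (hmem _)] using hg_lim.add hk_lim
  · exact Equicontinuous.isClosed_setOfPred_tendsto
      (LipschitzWith.uniformEquicontinuous _ C.toNNReal
        fun n => lipschitzWith_integral_mul (hu n) (hC n)).equicontinuous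
      (lipschitzWith_integral_mul hf hfC).continuous
  · intro g k hgk _ hg
    have hint (w : Y → ℝ) : ∫ y, w y * k y ∂μ = ∫ y, w y * g y ∂μ :=
      integral_congr_ae ((EventuallyEq.refl _ w).mul hgk.symm)
    simpa only [hint] using hg

theorem ae_norm_le_of_forall_norm_setIntegral_le [IsFiniteMeasure μ] (hf : Integrable f μ)
    (h : ∀ s, MeasurableSet s → ‖∫ y in s, f y ∂μ‖ ≤ C * μ.real s) : ∀ᵐ y ∂μ, ‖f y‖ ≤ C := by
  have hle : f ≤ᵐ[μ] fun _ => C :=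
    ae_le_of_forall_setIntegral_le hf (integrable_const C) fun s hs _ => by
      simpa [mul_comm] using (le_abs_self _).trans (h s hs)
  have hge : (fun _ => -C) ≤ᵐ[μ] f :=
    ae_le_of_forall_setIntegral_le (integrable_const (-C)) hf fun s hs _ => by
      simpa [mul_comm] using (abs_le.1 (h s hs)).1
  filter_upwards [hle, hge] with y hy hy' using abs_le.2 ⟨hy', hy⟩

theorem exists_subseq_tendstoWeakStar_of_isFiniteMeasure [IsFiniteMeasure μ]
    (hu : ∀ n, AEStronglyMeasurable (u n) μ) (hC : ∀ n, ∀ᵐ y ∂μ, ‖u n y‖ ≤ C) :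
    ∃ (f : Y → ℝ) (φ : ℕ → ℕ), Measurable f ∧ StrictMono φ ∧
      TendstoWeakStar μ (fun n => u (φ n)) f := by
  have hmem n : MemLp (u n) 2 μ := (memLp_top_of_bound (hu n) C (hC n)).mono_exponent le_top
  obtain ⟨w, φ, hφ, hw⟩ := exists_subseq_tendsto_inner (𝕜 := ℝ)
    (u := fun n => (hmem n).toLp (u n)) fun n =>
      Lp.norm_le_of_ae_bound (le_max_right C 0) (by
        filter_upwards [(hmem n).coeFn_toLp, hC n] with y hy hyC
        exact hy ▸ hyC.trans (le_max_left C 0))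
  have hlim s (hs : MeasurableSet s) :
      Tendsto (fun n => ∫ y in s, u (φ n) y ∂μ) atTop (𝓝 (∫ y in s, w y ∂μ)) := by
    have hint n : ∫ y in s, (hmem (φ n)).toLp (u (φ n)) y ∂μ = ∫ y in s, u (φ n) y ∂μ :=
      integral_congr_ae (ae_restrict_of_ae (hmem (φ n)).coeFn_toLp)
    simpa only [real_inner_comm (indicatorConstLp 2 hs (measure_ne_top μ s) (1 : ℝ)),
      L2.inner_indicatorConstLp_one, hint] using
      hw (indicatorConstLp 2 hs (measure_ne_top μ s) 1)
  have hwC : ∀ᵐ y ∂μ, ‖w y‖ ≤ C :=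
    ae_norm_le_of_forall_norm_setIntegral_le ((Lp.memLp w).integrable one_le_two) fun s hs =>
      le_of_tendsto' (hlim s hs).norm fun n =>
        norm_setIntegral_le_of_norm_le_const_ae (measure_lt_top μ s) (ae_restrict_of_ae (hC (φ n)))
  refine ⟨w, φ, (Lp.stronglyMeasurable w).measurable, hφ, ?_⟩
  exact tendstoWeakStar_of_tendsto_setIntegral (fun n => hu (φ n)) (fun n => hC (φ n))
    (Lp.aestronglyMeasurable w) hwC fun s hs _ => hlim s hs

theorem exists_subseq_tendstoWeakStar [SigmaFinite μ]
    (hu : ∀ n, AEStronglyMeasurable (u n) μ) (hC : ∀ n, ∀ᵐ y ∂μ, ‖u n y‖ ≤ C) :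
    ∃ (f : Y → ℝ) (φ : ℕ → ℕ), Measurable f ∧ StrictMono φ ∧
      TendstoWeakStar μ (fun n => u (φ n)) f := by
  have hac := toFinite_absolutelyContinuous μ
  obtain ⟨f, φ, hf, hφ, h⟩ := exists_subseq_tendstoWeakStar_of_isFiniteMeasure
    (fun n => (hu n).mono_ac hac) fun n => hac.ae_le (hC n)
  exact ⟨f, φ, hf, hφ, h.mono_ac (absolutelyContinuous_toFinite μ)⟩

end Compactness

end WeakStarConvergence

theorem exists_isFiniteMeasure_absolutelyContinuous_dirac {α ι : Type*} [MeasurableSpace α]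
    [Countable ι] (μ : Measure α) [SFinite μ] (a : ι → α) :
    ∃ m : Measure α, IsFiniteMeasure m ∧ μ ≪ m ∧ ∀ i, Measure.dirac (a i) ≪ m := by
  let m := μ + Measure.sum fun i => Measure.dirac (a i)
  have hm : m ≪ m.toFinite := absolutelyContinuous_toFinite m
  exact ⟨m.toFinite, inferInstance, (Measure.le_add_right le_rfl).absolutelyContinuous.trans hm,
    fun i => .trans ((Measure.le_sum _ i).trans (Measure.le_add_left le_rfl)).absolutelyContinuous
      hm⟩

section YoungMeasure

variable {X : Type*} [MeasurableSpace X]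

theorem IsYoungMeasure.measurable {ν : X → Measure ℝ} (hν : IsYoungMeasure ν) : Measurable ν := by
  have := hν.1
  refine .measure_of_isPiSystem_of_isProbabilityMeasure
    (borel_eq_generateFrom_Iic ℝ ▸ BorelSpace.measurable_eq) isPiSystem_Iic ?_
  rintro _ ⟨a, rfl⟩
  have hlim : Tendsto (fun n z => ∫⁻ x, (isClosed_Iic (a := a)).apprSeq n x ∂ν z) atTop
      (𝓝 fun z => ν z (Iic a)) :=
    tendsto_pi_nhds.2 fun z => HasOuterApproxClosed.tendsto_lintegral_apprSeq isClosed_Iic (ν z)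
  refine measurable_of_tendsto_metrizable (fun n => ?_) hlim
  set ψ : BoundedContinuousFunction ℝ ℝ≥0 := (isClosed_Iic (a := a)).apprSeq n
  let φ : BoundedContinuousFunction ℝ ℝ := ψ.comp _ NNReal.isometry_coe.lipschitz
  have hφ z : ENNReal.ofReal (∫ x, φ x ∂ν z) = ∫⁻ x, ψ x ∂ν z := by
    rw [ofReal_integral_eq_lintegral_ofReal (φ.integrable _) (ae_of_all _ fun x => (ψ x).2)]
    exact lintegral_congr fun x => ENNReal.ofReal_coe_nnreal
  simpa only [hφ] using (hν.2 φ).ennreal_ofReal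

theorem isYoungMeasure_iff_exists_kernel {ν : X → Measure ℝ} :
    IsYoungMeasure ν ↔ ∃ κ : Kernel X ℝ, IsMarkovKernel κ ∧ ⇑κ = ν := by
  refine ⟨fun hν => ⟨⟨ν, hν.measurable⟩, ⟨hν.1⟩, rfl⟩, ?_⟩
  rintro ⟨κ, hκ, rfl⟩
  exact ⟨hκ.isProbabilityMeasure, fun φ =>
    φ.continuous.stronglyMeasurable.integral_kernel.measurable⟩

theorem measurable_cdf_kernel (κ : Kernel X ℝ) [IsMarkovKernel κ] :
    Measurable fun q : X × ℝ => cdf (κ q.1) q.2 := by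
  have hs : MeasurableSet {r : (X × ℝ) × ℝ | r.2 ≤ r.1.2} :=
    measurableSet_le measurable_snd (measurable_snd.comp measurable_fst)
  simp only [cdf_eq_real]
  exact (Kernel.measurable_kernel_prodMk_left (κ := Kernel.prodMkRight ℝ κ) hs).ennreal_toReal

theorem iInf_Ioi_le_of_lt {c : ℚ → ℝ} (hc : Monotone c) (hbot : Tendsto c atBot (𝓝 0)) {q r : ℚ}
    (hqr : q < r) : ⨅ s : Ioi q, c s ≤ c r :=
  ciInf_le (f := fun s : Ioi q => c s) ⟨0, forall_mem_range.2 fun s => hc.le_of_tendsto hbot s⟩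
    ⟨r, hqr⟩

theorem isRatStieltjesPoint_iInf_Ioi {α : Type*} {c : α → ℚ → ℝ} {z : α} (hc : Monotone (c z))
    (hbot : Tendsto (c z) atBot (𝓝 0)) (htop : Tendsto (c z) atTop (𝓝 1)) :
    IsRatStieltjesPoint (fun z q => ⨅ r : Ioi q, c z r) z := by
  have hle (q : ℚ) : c z q ≤ ⨅ r : Ioi q, c z r := le_ciInf fun r => hc r.2.le
  have hge {q r : ℚ} (hqr : q < r) : ⨅ s : Ioi q, c z s ≤ c z r := iInf_Ioi_le_of_lt hc hbot hqr
  have hmono : Monotone fun q : ℚ => ⨅ r : Ioi q, c z r :=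
    fun q r hqr => le_ciInf fun s => hge (hqr.trans_lt s.2)
  have hbdd (t : ℚ) : BddBelow (range fun r : Ioi t => ⨅ s : Ioi (r : ℚ), c z s) :=
    ⟨0, forall_mem_range.2 fun r => (hc.le_of_tendsto hbot r).trans (hle r)⟩
  refine ⟨hmono, ?_, ?_, fun t => le_antisymm ?_ (le_ciInf fun r => hmono r.2.le)⟩
  · exact tendsto_of_tendsto_of_tendsto_of_le_of_le htop
      (htop.comp (tendsto_atTop_add_const_right atTop 1 tendsto_id)) hle fun q => hge (lt_add_one q)
  · exact tendsto_of_tendsto_of_tendsto_of_le_of_le hbot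
      (hbot.comp (tendsto_atBot_add_const_right atBot 1 tendsto_id)) hle fun q => hge (lt_add_one q)
  · refine le_ciInf fun r => ?_
    obtain ⟨s, hts, hsr⟩ := exists_between (show t < r from r.2)
    exact (ciInf_le (hbdd t) ⟨s, hts⟩).trans (hge hsr)

/- Two inequalities replace `cdf (η z) q = c z q`, because `c z` need not be right-continuous. -/
theorem exists_kernel_le_cdf_le {c : X → ℚ → ℝ} (hc : Measurable c) :
    ∃ η : Kernel X ℝ, IsMarkovKernel η ∧ ∀ z, Monotone (c z) → Tendsto (c z) atBot (𝓝 0) →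
      Tendsto (c z) atTop (𝓝 1) →
        (∀ q : ℚ, c z q ≤ cdf (η z) q) ∧ ∀ q r : ℚ, q < r → cdf (η z) q ≤ c z r := by
  have hR : Measurable fun z (q : ℚ) => ⨅ r : Ioi q, c z r :=
    measurable_pi_lambda _ fun q => .iInf fun r : Ioi q => (measurable_pi_apply (r : ℚ)).comp hc
  refine ⟨⟨_, measurable_measure_stieltjesOfMeasurableRat hR⟩, ⟨fun z => inferInstanceAs
    (IsProbabilityMeasure (stieltjesOfMeasurableRat _ hR z).measure)⟩,
    fun z hmono hbot htop => ?_⟩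
  have hcdf (q : ℚ) : cdf (stieltjesOfMeasurableRat _ hR z).measure q = ⨅ r : Ioi q, c z r := by
    rw [cdf_measure_stieltjesFunction _ (tendsto_stieltjesOfMeasurableRat_atBot hR z)
      (tendsto_stieltjesOfMeasurableRat_atTop hR z), stieltjesOfMeasurableRat_eq,
      toRatCDF_of_isRatStieltjesPoint (isRatStieltjesPoint_iInf_Ioi hmono hbot htop)]
  simp only [Kernel.coe_mk, hcdf]
  exact ⟨fun q => le_ciInf fun s => hmono s.2.le, fun q r => iInf_Ioi_le_of_lt hmono hbot⟩

theorem eq_of_le_of_le_of_continuousAt {c : ℚ → ℝ} {G : ℝ → ℝ} {x v : ℝ}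
    (hcG : ∀ q : ℚ, c q ≤ G q) (hGc : ∀ q r : ℚ, q < r → G q ≤ c r) (hG : ContinuousAt G x)
    (hcv : ∀ q : ℚ, q ≤ x → c q ≤ v) (hvc : ∀ q : ℚ, x ≤ q → v ≤ c q) : v = G x := by
  obtain ⟨a, ha_mono, hax, ha⟩ := Real.exists_seq_rat_strictMono_tendsto x
  obtain ⟨b, -, hxb, hb⟩ := Real.exists_seq_rat_strictAnti_tendsto x
  refine le_antisymm (ge_of_tendsto' (hG.tendsto.comp hb) fun n => ?_)
    (le_of_tendsto' (hG.tendsto.comp ha) fun n => ?_)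
  · exact (hvc _ (hxb n).le).trans (hcG _)
  · exact (hGc _ _ (ha_mono n.lt_succ_self)).trans (hcv _ (hax _).le)

end YoungMeasure

theorem one_sub_cdf_eq_real_Ioi (μ : Measure ℝ) [IsProbabilityMeasure μ] (x : ℝ) :
    1 - cdf μ x = μ.real (Ioi x) := by
  rw [cdf_eq_real, ← probReal_compl_eq_one_sub measurableSet_Iic, compl_Iic]

theorem continuousAt_cdf_of_measure_singleton_eq_zero {μ : Measure ℝ} [IsProbabilityMeasure μ]
    {x : ℝ} (hx : μ {x} = 0) : ContinuousAt (cdf μ) x := by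
  rw [(monotone_cdf μ).continuousAt_iff_leftLim_eq_rightLim, StieltjesFunction.rightLim_eq]
  rw [← measure_cdf μ, StieltjesFunction.measure_singleton, ENNReal.ofReal_eq_zero, sub_nonpos]
    at hx
  exact ((monotone_cdf μ).leftLim_le le_rfl).antisymm hx

theorem tendsto_iSup_measure_Iic_of_isTightMeasureSet {S : Set (Measure ℝ)}
    (hS : IsTightMeasureSet S) :
    Tendsto (fun x => ⨆ μ ∈ S, μ (Iic x)) atBot (𝓝 0) := by
  have hnorm := (tendsto_measure_norm_gt_of_isTightMeasureSet hS).comp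
    (tendsto_neg_atBot_atTop.comp (tendsto_atBot_add_const_right atBot (1 : ℝ) tendsto_id))
  refine tendsto_of_tendsto_of_tendsto_of_le_of_le tendsto_const_nhds hnorm
    (fun _ => zero_le) fun x => iSup₂_mono fun _ _ => measure_mono
      fun y (hy : y ≤ x) => ?_
  change -(x + 1) < |y|
  linarith [neg_le_abs y]

theorem tendsto_iSup_measure_Ioi_of_isTightMeasureSet {S : Set (Measure ℝ)}
    (hS : IsTightMeasureSet S) :
    Tendsto (fun x => ⨆ μ ∈ S, μ (Ioi x)) atTop (𝓝 0) :=
  tendsto_of_tendsto_of_tendsto_of_le_of_le tendsto_const_nhds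
    (tendsto_measure_norm_gt_of_isTightMeasureSet hS) (fun _ => zero_le) fun x =>
    iSup₂_mono fun _ _ => measure_mono fun y (hy : x < y) => hy.trans_le (le_abs_self y)

theorem isTightMeasureSet_of_lintegral_rpow_le {E : Type*} [NormedAddCommGroup E] [ProperSpace E]
    [MeasurableSpace E] [BorelSpace E] {S : Set (Measure E)} {p : ℝ} (hp : 0 < p) {C : ℝ≥0∞}
    (hC : C ≠ ∞) (h : ∀ μ ∈ S, ∫⁻ x, ENNReal.ofReal (‖x‖ ^ p) ∂μ ≤ C) : IsTightMeasureSet S := by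
  have hlim : Tendsto (fun r : ℝ => C / ENNReal.ofReal (r ^ p)) atTop (𝓝 0) := by
    simpa only [ENNReal.div_top, Function.comp_apply] using ENNReal.Tendsto.const_div
      (ENNReal.tendsto_ofReal_atTop.comp (tendsto_rpow_atTop hp)) (.inr hC)
  refine isTightMeasureSet_of_tendsto_measure_norm_gt
    (tendsto_of_tendsto_of_tendsto_of_le_of_le' tendsto_const_nhds hlim
      (.of_forall fun _ => zero_le) ?_)
  filter_upwards [eventually_gt_atTop 0] with r hr
  refine iSup₂_le fun μ hμ => ?_
  have hpos : ENNReal.ofReal (r ^ p) ≠ 0 := by simpa using Real.rpow_pos_of_pos hr p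
  rw [ENNReal.le_div_iff_mul_le (.inl hpos) (.inl ENNReal.ofReal_ne_top), mul_comm]
  refine le_trans ?_ ((mul_meas_ge_le_lintegral₀ ?_ (ENNReal.ofReal (r ^ p))).trans (h μ hμ))
  · exact mul_right_mono (measure_mono fun x (hx : r < ‖x‖) =>
      ENNReal.ofReal_le_ofReal (Real.rpow_le_rpow hr.le hx.le hp.le))
  · fun_prop

theorem isTightMeasureSet_range_bind_of_lintegral_rpow_le {X ι E : Type*} [MeasurableSpace X]
    {lam : Measure X} [NormedAddCommGroup E] [ProperSpace E] [MeasurableSpace E] [BorelSpace E]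
    {ν : ι → X → Measure E} (hν : ∀ i, AEMeasurable (ν i) lam) {p : ℝ} (hp : 0 < p) {C : ℝ≥0∞}
    (hC : C ≠ ∞) (h : ∀ i, ∫⁻ z, ∫⁻ x, ENNReal.ofReal (‖x‖ ^ p) ∂ν i z ∂lam ≤ C) :
    IsTightMeasureSet (range fun i => lam.bind (ν i)) := by
  refine isTightMeasureSet_of_lintegral_rpow_le hp hC (forall_mem_range.2 fun i => ?_)
  rw [Measure.lintegral_bind (hν i) (by fun_prop)]
  exact h i

theorem ae_tendsto_zero_of_tendsto_lintegral {Y ι : Type*} [MeasurableSpace Y] {μ : Measure Y}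
    [Countable ι] {l : Filter ι} [l.NeBot] {c : Y → ι → ℝ} (hc : ∀ i, Measurable fun y => c y i)
    (hc_nonneg : ∀ᵐ y ∂μ, ∀ i, 0 ≤ c y i) (hc_iInf : ∀ᵐ y ∂μ, Tendsto (c y) l (𝓝 (⨅ i, c y i)))
    (h : Tendsto (fun i => ∫⁻ y, ENNReal.ofReal (c y i) ∂μ) l (𝓝 0)) :
    ∀ᵐ y ∂μ, Tendsto (c y) l (𝓝 0) := by
  have : Nonempty ι := l.nonempty_of_neBot
  have hint : ∫⁻ y, ENNReal.ofReal (⨅ i, c y i) ∂μ = 0 := by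
    refine le_antisymm (ge_of_tendsto' h fun i => lintegral_mono_ae ?_) zero_le
    filter_upwards [hc_nonneg] with y hy
    exact ENNReal.ofReal_le_ofReal (ciInf_le ⟨0, forall_mem_range.2 hy⟩ i)
  filter_upwards [hc_nonneg, hc_iInf, (lintegral_eq_zero_iff (Measurable.iInf hc).ennreal_ofReal).1
    hint] with y hy hlim hzero
  rwa [le_antisymm (ENNReal.ofReal_eq_zero.1 hzero) (le_ciInf hy)] at hlim

section KernelLimits

variable {X : Type*} [MeasurableSpace X] {lam : Measure X}

theorem lintegral_ofReal_cdf_kernel (κ : Kernel X ℝ) [IsMarkovKernel κ] (x : ℝ) :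
    ∫⁻ z, ENNReal.ofReal (cdf (κ z) x) ∂lam = lam.bind κ (Iic x) := by
  rw [Measure.bind_apply measurableSet_Iic κ.aemeasurable]
  simp only [ofReal_cdf]

theorem lintegral_ofReal_one_sub_cdf_kernel (κ : Kernel X ℝ) [IsMarkovKernel κ] (x : ℝ) :
    ∫⁻ z, ENNReal.ofReal (1 - cdf (κ z) x) ∂lam = lam.bind κ (Ioi x) := by
  rw [Measure.bind_apply measurableSet_Ioi κ.aemeasurable]
  simp only [one_sub_cdf_eq_real_Ioi, ofReal_measureReal (measure_ne_top _ _)]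

theorem ae_continuousAt_cdf_kernel {ρ : Measure ℝ} [SFinite ρ] [NullSingletonClass ρ]
    (η : Kernel X ℝ) [IsMarkovKernel η] :
    ∀ᵐ y ∂lam.prod ρ, ContinuousAt (cdf (η y.1)) y.2 := by
  have hsub : {y : X × ℝ | η y.1 {y.2} = 0} ⊆ {y | ContinuousAt (cdf (η y.1)) y.2} :=
    fun y => continuousAt_cdf_of_measure_singleton_eq_zero
  have hmeas : MeasurableSet {y : X × ℝ | η y.1 {y.2} = 0} := by
    have hs : MeasurableSet {r : (X × ℝ) × ℝ | r.2 = r.1.2} :=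
      measurableSet_eq_fun measurable_snd (measurable_snd.comp measurable_fst)
    exact (Kernel.measurable_kernel_prodMk_left (κ := Kernel.prodMkRight ℝ η) hs)
      (measurableSet_singleton 0)
  refine Eventually.mono ((Measure.ae_prod_iff_ae_ae hmeas).2 (ae_of_all _ fun z => ?_)) hsub
  have hcount : {x : ℝ | 0 < η z {x}}.Countable :=
    Measure.countable_meas_level_set_pos measurable_id
  filter_upwards [hcount.ae_notMem ρ] with x hx using (not_lt.1 hx).antisymm zero_le

variable [SigmaFinite lam] {τ : Measure ℝ} [SigmaFinite τ] {κ : ℕ → Kernel X ℝ}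
  [∀ n, IsMarkovKernel (κ n)] {U : X × ℝ → ℝ}

theorem ae_tendsto_atBot_of_tendstoWeakStar_cdf
    (h : TendstoWeakStar (lam.prod τ) (fun n y => cdf (κ n y.1) y.2) U) (hU : Measurable U)
    (hτ : ∀ q : ℚ, Measure.dirac (q : ℝ) ≪ τ)
    (htight : IsTightMeasureSet (range fun n => lam.bind (κ n))) :
    ∀ᵐ z ∂lam, Tendsto (fun q : ℚ => U (z, q)) atBot (𝓝 0) := by
  have hnonneg : ∀ᵐ z ∂lam, ∀ q : ℚ, 0 ≤ U (z, q) := ae_all_iff.2 fun q =>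
    (h.comp_prodMk_right (hτ q)).ae_nonneg fun n => ae_of_all _ fun z => cdf_nonneg _ _
  refine ae_tendsto_zero_of_tendsto_lintegral (fun q => by fun_prop) hnonneg ?_ ?_
  · filter_upwards [hnonneg, h.ae_monotone_comp (fun n z => monotone_cdf (κ n z)) Rat.cast_mono hτ]
      with z hz hmono using tendsto_atBot_ciInf hmono ⟨0, forall_mem_range.2 hz⟩
  · refine tendsto_of_tendsto_of_tendsto_of_le_of_le tendsto_const_nhds
      ((tendsto_iSup_measure_Iic_of_isTightMeasureSet htight).comp
        (tendsto_ratCast_atBot_iff.2 tendsto_id)) (fun _ => zero_le)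
      fun q => (h.comp_prodMk_right (hτ q)).lintegral_ofReal_le
        (fun n => ae_of_all _ fun z => cdf_nonneg _ _) fun n => ?_
    rw [lintegral_ofReal_cdf_kernel]
    exact le_iSup₂ (f := fun (μ : Measure ℝ) _ => μ (Iic (q : ℝ))) _ (mem_range_self n)

theorem ae_tendsto_atTop_of_tendstoWeakStar_cdf
    (h : TendstoWeakStar (lam.prod τ) (fun n y => cdf (κ n y.1) y.2) U) (hU : Measurable U)
    (hτ : ∀ q : ℚ, Measure.dirac (q : ℝ) ≪ τ)
    (htight : IsTightMeasureSet (range fun n => lam.bind (κ n))) :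
    ∀ᵐ z ∂lam, Tendsto (fun q : ℚ => U (z, q)) atTop (𝓝 1) := by
  have hsub (q : ℚ) : TendstoWeakStar lam (fun n z => 1 - cdf (κ n z) q) fun z => 1 - U (z, q) :=
    (TendstoWeakStar.const (memLp_top_const 1)).sub (h.comp_prodMk_right (hτ q))
  have hnonneg : ∀ᵐ z ∂lam, ∀ q : ℚ, 0 ≤ 1 - U (z, q) := ae_all_iff.2 fun q =>
    (hsub q).ae_nonneg fun n => ae_of_all _ fun z => sub_nonneg.2 (cdf_le_one _ _)
  suffices hlim : ∀ᵐ z ∂lam, Tendsto (fun q : ℚ => 1 - U (z, q)) atTop (𝓝 0) by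
    filter_upwards [hlim] with z hz
    simpa only [sub_sub_cancel, sub_zero] using hz.const_sub 1
  refine ae_tendsto_zero_of_tendsto_lintegral (fun q => by fun_prop) hnonneg ?_ ?_
  · filter_upwards [hnonneg, h.ae_monotone_comp (fun n z => monotone_cdf (κ n z)) Rat.cast_mono hτ]
      with z hz hmono
    exact tendsto_atTop_ciInf (fun q r hqr => sub_le_sub_left (hmono hqr) 1)
      ⟨0, forall_mem_range.2 hz⟩
  · refine tendsto_of_tendsto_of_tendsto_of_le_of_le tendsto_const_nhds
      ((tendsto_iSup_measure_Ioi_of_isTightMeasureSet htight).comp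
        (tendsto_ratCast_atTop_iff.2 tendsto_id)) (fun _ => zero_le)
      fun q => (hsub q).lintegral_ofReal_le
        (fun n => ae_of_all _ fun z => sub_nonneg.2 (cdf_le_one _ _)) fun n => ?_
    rw [lintegral_ofReal_one_sub_cdf_kernel]
    exact le_iSup₂ (f := fun (μ : Measure ℝ) _ => μ (Ioi (q : ℝ))) _ (mem_range_self n)

theorem exists_kernel_ae_eq_cdf_of_tendstoWeakStar {ρ : Measure ℝ} [SFinite ρ]
    [NullSingletonClass ρ]
    (h : TendstoWeakStar (lam.prod τ) (fun n y => cdf (κ n y.1) y.2) U) (hU : Measurable U)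
    (hρ : ρ ≪ τ) (hτ : ∀ q : ℚ, Measure.dirac (q : ℝ) ≪ τ)
    (htight : IsTightMeasureSet (range fun n => lam.bind (κ n))) :
    ∃ η : Kernel X ℝ, IsMarkovKernel η ∧ U =ᵐ[lam.prod ρ] fun y => cdf (η y.1) y.2 := by
  obtain ⟨η, hη, hηU⟩ := exists_kernel_le_cdf_le (c := fun z (q : ℚ) => U (z, q)) (by fun_prop)
  refine ⟨η, hη, ?_⟩
  have hbetween : ∀ᵐ z ∂lam, (∀ q : ℚ, U (z, q) ≤ cdf (η z) q) ∧
      ∀ q r : ℚ, q < r → cdf (η z) q ≤ U (z, r) := by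
    filter_upwards [h.ae_monotone_comp (fun n z => monotone_cdf (κ n z)) Rat.cast_mono hτ,
      ae_tendsto_atBot_of_tendstoWeakStar_cdf h hU hτ htight,
      ae_tendsto_atTop_of_tendstoWeakStar_cdf h hU hτ htight] with z using hηU z
  have hsection : ∀ᵐ y ∂lam.prod ρ, ∀ q : ℚ,
      ((q : ℝ) ≤ y.2 → U (y.1, q) ≤ U y) ∧ (y.2 ≤ q → U y ≤ U (y.1, q)) :=
    ae_all_iff.2 fun q => (Measure.AbsolutelyContinuous.rfl.prod hρ).ae_le
      (h.ae_section_le (fun n z => monotone_cdf (κ n z)) (hτ q))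
  filter_upwards [Measure.quasiMeasurePreserving_fst.ae hbetween, hsection,
    ae_continuousAt_cdf_kernel η] with y hy hyU hcont
  exact eq_of_le_of_le_of_continuousAt hy.1 hy.2 hcont (fun q => (hyU q).1) fun q => (hyU q).2

end KernelLimits

/- `ρ` is enlarged by unit masses at the rational points before the weak-* limit is extracted:
this single limit then controls both the sections at rational points and the limit in
`L^∞(lam.prod ρ)`, and no diagonal extraction is needed. -/
theorem exists_subseq_tendstoWeakStar_cdf_kernel {X : Type*} [MeasurableSpace X] {lam : Measure X}
    [SigmaFinite lam] {ρ : Measure ℝ} [SigmaFinite ρ] [NullSingletonClass ρ] {κ : ℕ → Kernel X ℝ}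
    [∀ n, IsMarkovKernel (κ n)] (htight : IsTightMeasureSet (range fun n => lam.bind (κ n))) :
    ∃ (η : Kernel X ℝ) (φ : ℕ → ℕ), IsMarkovKernel η ∧ StrictMono φ ∧
      TendstoWeakStar (lam.prod ρ) (fun n y => cdf (κ (φ n) y.1) y.2)
        fun y => cdf (η y.1) y.2 := by
  obtain ⟨τ, _, hρ, hτ⟩ :=
    exists_isFiniteMeasure_absolutelyContinuous_dirac ρ fun q : ℚ => (q : ℝ)
  obtain ⟨U, φ, hU, hφ, h⟩ := exists_subseq_tendstoWeakStar (μ := lam.prod τ) (C := 1)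
    (u := fun n y => cdf (κ n y.1) y.2)
    (fun n => (measurable_cdf_kernel (κ n)).aestronglyMeasurable) fun n => ae_of_all _ fun y =>
      (Real.norm_of_nonneg (cdf_nonneg _ _)).trans_le (cdf_le_one _ _)
  have htight_subseq : IsTightMeasureSet (range fun n => lam.bind (κ (φ n))) :=
    htight.subset (range_comp_subset_range φ fun n => lam.bind (κ n))
  obtain ⟨η, hη, hηU⟩ := exists_kernel_ae_eq_cdf_of_tendstoWeakStar h hU hρ hτ htight_subseq
  exact ⟨η, φ, hη, hφ, (h.mono_ac (Measure.AbsolutelyContinuous.rfl.prod hρ)).congr_limit hηU⟩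

theorem kineticFunction_weakStar_compactness_general {X : Type*} [MeasurableSpace X]
    (lam : Measure X) [SigmaFinite lam] (ν : ℕ → X → Measure ℝ) (hY : ∀ n, IsYoungMeasure (ν n))
    (htight : IsTightMeasureSet (range fun n => lam.bind (ν n))) :
    ∃ (νl : X → Measure ℝ) (s : ℕ → ℕ), IsYoungMeasure νl ∧ StrictMono s ∧
      ∀ g : X × ℝ → ℝ, Integrable g (lam.prod volume) →
        Tendsto
          (fun k => ∫ q : X × ℝ,
            ((ν (s k) q.1) (Ioi q.2)).toReal * g q ∂(lam.prod volume)) atTop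
          (𝓝 (∫ q : X × ℝ,
            ((νl q.1) (Ioi q.2)).toReal * g q ∂(lam.prod volume))) := by
  choose κ hκ hκν using fun n => isYoungMeasure_iff_exists_kernel.1 (hY n)
  simp only [← hκν] at htight ⊢
  obtain ⟨η, s, hη, hs, h⟩ := exists_subseq_tendstoWeakStar_cdf_kernel (ρ := volume) htight
  refine ⟨η, s, isYoungMeasure_iff_exists_kernel.2 ⟨η, hη, rfl⟩, hs, fun g hg => ?_⟩
  simpa only [one_sub_cdf_eq_real_Ioi, measureReal_def] using
    ((TendstoWeakStar.const (memLp_top_const 1)).sub h).tendsto_integral g hg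

/-- Weak-* compactness of kinetic functions: given Young measures
`ν^n` with a uniform `p`-th moment bound (`p ≥ 1`) on a finite measure space with
separable `L¹`, the kinetic functions `f_n(z,ξ) = ν^n_z((ξ,∞))` admit a subsequence
converging weak-* in `L^∞(X × ℝ)` to the kinetic function `f(z,ξ) = ν_z((ξ,∞))` of a
Young measure `ν`: for every `g ∈ L¹(X × ℝ, λ ⊗ Leb)`,
`∫∫ f_n g → ∫∫ f g`. -/
theorem kineticFunction_weakStar_compactness
    {X : Type*} [MeasurableSpace X] (lam : Measure X) [IsFiniteMeasure lam]
    (hsep : TopologicalSpace.SeparableSpace (MeasureTheory.Lp ℝ 1 lam))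
    (p : ℝ) (hp : 1 ≤ p) (ν : ℕ → X → Measure ℝ)
    (hY : ∀ n, IsYoungMeasure (ν n))
    (hmom : ∃ C : ℝ≥0∞, C ≠ ⊤ ∧
      ∀ n, (∫⁻ z, (∫⁻ ξ, ENNReal.ofReal (|ξ| ^ p) ∂(ν n z)) ∂lam) ≤ C) :
    ∃ (νl : X → Measure ℝ) (s : ℕ → ℕ), IsYoungMeasure νl ∧ StrictMono s ∧
      ∀ g : X × ℝ → ℝ, Integrable g (lam.prod volume) →
        Tendsto
          (fun k => ∫ q : X × ℝ,
            ((ν (s k) q.1) (Ioi q.2)).toReal * g q ∂(lam.prod volume)) atTop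
          (𝓝 (∫ q : X × ℝ,
            ((νl q.1) (Ioi q.2)).toReal * g q ∂(lam.prod volume))) := by
  obtain ⟨C, hC, hνC⟩ := hmom
  exact kineticFunction_weakStar_compactness_general lam ν hY
    (isTightMeasureSet_range_bind_of_lintegral_rpow_le (fun n => (hY n).measurable.aemeasurable)
      (zero_lt_one.trans_le hp) hC hνC)
end
end

section
/- Let (X, λ) be a finite measure space, let p ≥ 1, and let u_n, u : X → ℝ be measurable functions with sup_n ∫_X |u_n(z)|^p dλ(z) < +∞ and ∫_X |u(z)|^p dλ(z) < +∞. Define f_n(z,ξ) = 1_{u_n(z) > ξ} and f(z,ξ) = 1_{u(z) > ξ}, and assume f_n → f weak-* in L^∞(X × ℝ, λ ⊗ Leb), i.e. for every g ∈ L¹(X × ℝ, λ ⊗ Leb): ∫∫ f_n g dλ dξ → ∫∫ f g dλ dξ. Then for every q with 1 ≤ q < p, u_n → u strongly in L^q(X, λ). -/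
open MeasureTheory Filter Set
open scoped ENNReal Topology

noncomputable section

/-!
Testing the weak-* convergence of the indicators `1_{A_n} → 1_A` against `1_{S ∖ A}` and `1_{S ∩ A}`
gives `|(A_n ∆ A) ∩ S| → 0` for every `S` of finite measure: between indicators, weak-* convergence
is automatically local `L¹` convergence. For the sets under the graphs of `u_n` and `u`, the fibre
of `A_n ∆ A` over `z` is the interval between `u_n(z)` and `u(z)`, so Chebyshev's inequality yields
convergence in measure of `u_n` to `u`. Since `λ` is finite, Hölder's inequality on
`{|u_n - u| ≥ ε}` and the bound in `L^p` upgrade this to convergence in `L^q` for `q < p`.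
-/

section WeakStar

variable {ι Y : Type*} [MeasurableSpace Y]

/-- Weak-* convergence in `L^∞(Y, ν)`, in duality with `L¹(Y, ν)`. Boundedness of the functions is
not part of the definition; it is only used for indicators, which are bounded. -/
def WeakStarTendsto (ν : Measure Y) (F : ι → Y → ℝ) (l : Filter ι) (G : Y → ℝ) : Prop :=
  ∀ g : Y → ℝ, Integrable g ν →
    Tendsto (fun i => ∫ y, F i y * g y ∂ν) l (𝓝 (∫ y, G y * g y ∂ν))

variable {l : Filter ι} {ν : Measure Y} {A : ι → Set Y} {B S : Set Y}

lemma WeakStarTendsto.tendsto_measure_inter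
    (h : WeakStarTendsto ν (fun i => (A i).indicator 1) l (B.indicator 1))
    (hA : ∀ i, MeasurableSet (A i)) (hB : MeasurableSet B) (hS : MeasurableSet S)
    (hνS : ν S ≠ ∞) : Tendsto (fun i => ν (A i ∩ S)) l (𝓝 (ν (B ∩ S))) := by
  have integral_eq {T : Set Y} (hT : MeasurableSet T) :
      ∫ y, T.indicator (1 : Y → ℝ) y * S.indicator (1 : Y → ℝ) y ∂ν = (ν (T ∩ S)).toReal := by
    simp_rw [← measureReal_def, ← integral_indicator_one (hT.inter hS), inter_indicator_one,
      Pi.mul_apply]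
  have ne_top (T : Set Y) : ν (T ∩ S) ≠ ∞ := measure_ne_top_of_subset inter_subset_right hνS
  have := h (S.indicator 1) ((integrable_indicator_iff hS).2 (integrableOn_const hνS))
  simp_rw [integral_eq (hA _), integral_eq hB] at this
  exact (ENNReal.tendsto_toReal_iff (fun i => ne_top (A i)) (ne_top B)).1 this

lemma WeakStarTendsto.tendsto_measure_symmDiff_inter
    (h : WeakStarTendsto ν (fun i => (A i).indicator 1) l (B.indicator 1))
    (hA : ∀ i, MeasurableSet (A i)) (hB : MeasurableSet B) (hS : MeasurableSet S)
    (hνS : ν S ≠ ∞) : Tendsto (fun i => ν (symmDiff (A i) B ∩ S)) l (𝓝 0) := by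
  have hνSB : ν (S ∩ B) ≠ ∞ := measure_ne_top_of_subset inter_subset_left hνS
  have h_excess : Tendsto (fun i => ν (A i ∩ (S \ B))) l (𝓝 0) := by
    simpa using h.tendsto_measure_inter hA hB (hS.diff hB)
      (measure_ne_top_of_subset sdiff_subset hνS)
  have h_deficit : Tendsto (fun i => ν ((S ∩ B) \ A i)) l (𝓝 0) := by
    have h_diff (i : ι) : ν ((S ∩ B) \ A i) = ν (S ∩ B) - ν (A i ∩ (S ∩ B)) := by
      rw [inter_comm (A i), ← measure_inter_add_sdiff (S ∩ B) (hA i),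
        ENNReal.add_sub_cancel_left (measure_ne_top_of_subset inter_subset_left hνSB)]
    simp_rw [h_diff]
    simpa [inter_left_comm B S B] using ENNReal.Tendsto.sub tendsto_const_nhds
      (h.tendsto_measure_inter hA hB (hS.inter hB) hνSB) (.inl hνSB)
  refine tendsto_of_tendsto_of_tendsto_of_le_of_le tendsto_const_nhds
    (by simpa using h_excess.add h_deficit) (fun _ => zero_le) fun i => ?_
  calc ν (symmDiff (A i) B ∩ S)
      ≤ ν (A i ∩ (S \ B) ∪ (S ∩ B) \ A i) := measure_mono fun y => by
        simp only [mem_inter_iff, mem_symmDiff, mem_union, Set.mem_sdiff]; tauto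
    _ ≤ ν (A i ∩ (S \ B)) + ν ((S ∩ B) \ A i) := measure_union_le _ _

end WeakStar

section Equilibrium

variable {ι X : Type*}

/-- The strict hypograph `{(z, ξ) | ξ < u z}` of a real function. -/
def strictHypograph (u : X → ℝ) : Set (X × ℝ) := {y | y.2 < u y.1}

/-- The kinetic function `f(z, ξ) = 1_{u(z) > ξ}` at equilibrium with profile `u`. -/
def equilibriumKinetic (u : X → ℝ) : X × ℝ → ℝ := fun y => if y.2 < u y.1 then 1 else 0

lemma equilibriumKinetic_eq_indicator (u : X → ℝ) :
    equilibriumKinetic u = (strictHypograph u).indicator 1 := by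
  ext y
  simp [equilibriumKinetic, strictHypograph, indicator_apply]

variable [MeasurableSpace X] {μ : Measure X}

lemma measurableSet_strictHypograph {u : X → ℝ} (hu : Measurable u) :
    MeasurableSet (strictHypograph u) :=
  measurableSet_lt measurable_snd (hu.comp measurable_fst)

lemma ofReal_le_volume_symmDiff_Iio_inter_Icc {a b R ε : ℝ} (hb : |b| ≤ R) (hab : ε ≤ |a - b|) :
    ENNReal.ofReal ε ≤ volume (symmDiff (Iio a) (Iio b) ∩ Icc (-(R + ε)) (R + ε)) := by
  obtain ⟨hRb, hbR⟩ := abs_le.1 hb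
  rcases le_total b a with hba | hba
  · rw [abs_of_nonneg (sub_nonneg.2 hba)] at hab
    calc ENNReal.ofReal ε = volume (Ico b (b + ε)) := by simp
      _ ≤ _ := measure_mono fun ξ hξ => by
        obtain ⟨hbξ, hξb⟩ := hξ
        exact ⟨.inl ⟨by simp only [mem_Iio]; linarith, not_lt.2 hbξ⟩, by constructor <;> linarith⟩
  · rw [abs_of_nonpos (sub_nonpos.2 hba)] at hab
    calc ENNReal.ofReal ε = volume (Ico (b - ε) b) := by simp
      _ ≤ _ := measure_mono fun ξ hξ => by
        obtain ⟨hbξ, hξb⟩ := hξ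
        exact ⟨.inr ⟨hξb, by simp only [mem_Iio]; linarith⟩, by constructor <;> linarith⟩

lemma ofReal_mul_measure_le_prod_symmDiff_strictHypograph {u v : X → ℝ} (hu : Measurable u)
    (hv : Measurable v) (R ε : ℝ) :
    ENNReal.ofReal ε * μ {x | |v x| ≤ R ∧ ε ≤ |u x - v x|} ≤
      μ.prod volume (symmDiff (strictHypograph u) (strictHypograph v) ∩
        univ ×ˢ Icc (-(R + ε)) (R + ε)) := by
  set D := symmDiff (strictHypograph u) (strictHypograph v) ∩ univ ×ˢ Icc (-(R + ε)) (R + ε)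
  have hD : MeasurableSet D :=
    ((measurableSet_strictHypograph hu).symmDiff (measurableSet_strictHypograph hv)).inter
      (MeasurableSet.univ.prod measurableSet_Icc)
  have fibre (x : X) : Prod.mk x ⁻¹' D =
      symmDiff (Iio (u x)) (Iio (v x)) ∩ Icc (-(R + ε)) (R + ε) := by
    ext ξ
    simp [D, strictHypograph, mem_symmDiff]
  calc ENNReal.ofReal ε * μ {x | |v x| ≤ R ∧ ε ≤ |u x - v x|}
      ≤ ENNReal.ofReal ε * μ {x | ENNReal.ofReal ε ≤ volume (Prod.mk x ⁻¹' D)} := by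
        gcongr with x
        rintro ⟨hvR, huv⟩
        rw [fibre]
        exact ofReal_le_volume_symmDiff_Iio_inter_Icc hvR huv
    _ ≤ ∫⁻ x, volume (Prod.mk x ⁻¹' D) ∂μ :=
        mul_meas_ge_le_lintegral (measurable_measure_prodMk_left hD) _
    _ = μ.prod volume D := (Measure.prod_apply hD).symm

variable [IsFiniteMeasure μ]

lemma tendsto_measure_setOf_lt_atTop {f : X → ℝ} (hf : AEMeasurable f μ) :
    Tendsto (fun R => μ {x | R < f x}) atTop (𝓝 0) := by
  have h_iInter : ⋂ R : ℝ, {x | R < f x} = ∅ :=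
    eq_empty_of_forall_notMem fun x hx => lt_irrefl (f x) (mem_iInter.1 hx (f x))
  rw [← measure_empty (μ := μ), ← h_iInter]
  exact tendsto_measure_iInter_atTop (fun R => nullMeasurableSet_lt aemeasurable_const hf)
    (fun R R' hR x hx => hR.trans_lt hx) ⟨0, measure_ne_top μ _⟩

variable {l : Filter ι} {u : ι → X → ℝ} {v : X → ℝ}

theorem tendstoInMeasure_of_weakStarTendsto_equilibriumKinetic (hu : ∀ i, Measurable (u i))
    (hv : Measurable v)
    (h : WeakStarTendsto (μ.prod volume) (fun i => equilibriumKinetic (u i)) l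
      (equilibriumKinetic v)) :
    TendstoInMeasure μ u l v := by
  refine tendstoInMeasure_iff_norm.2 fun ε hε => ENNReal.tendsto_nhds_zero.2 fun δ hδ => ?_
  have hδ2 : 0 < δ / 2 := ENNReal.half_pos hδ.ne'
  obtain ⟨R, hR⟩ := (ENNReal.tendsto_nhds_zero.1
    (tendsto_measure_setOf_lt_atTop (μ := μ) hv.abs.aemeasurable) (δ / 2) hδ2).exists
  have h_strip : μ.prod volume (univ ×ˢ Icc (-(R + ε)) (R + ε)) ≠ ∞ := by
    rw [Measure.prod_prod]
    exact ENNReal.mul_ne_top (measure_ne_top μ _) isCompact_Icc.measure_lt_top.ne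
  simp_rw [equilibriumKinetic_eq_indicator] at h
  have h_symmDiff := h.tendsto_measure_symmDiff_inter
    (fun i => measurableSet_strictHypograph (hu i)) (measurableSet_strictHypograph hv)
    (MeasurableSet.univ.prod measurableSet_Icc) h_strip
  have hεδ : 0 < ENNReal.ofReal ε * (δ / 2) := ENNReal.mul_pos (by simpa using hε) hδ2.ne'
  filter_upwards [ENNReal.tendsto_nhds_zero.1 h_symmDiff _ hεδ] with i hi
  have h_bounded : μ {x | |v x| ≤ R ∧ ε ≤ |u i x - v x|} ≤ δ / 2 :=
    (ENNReal.mul_le_mul_iff_right (by simpa using hε) ENNReal.ofReal_ne_top).1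
      ((ofReal_mul_measure_le_prod_symmDiff_strictHypograph (hu i) hv R ε).trans hi)
  calc μ {x | ε ≤ ‖u i x - v x‖}
      ≤ μ ({x | R < |v x|} ∪ {x | |v x| ≤ R ∧ ε ≤ |u i x - v x|}) :=
        measure_mono fun x hx => (lt_or_ge R |v x|).imp id fun hvR => ⟨hvR, hx⟩
    _ ≤ δ / 2 + δ / 2 := (measure_union_le _ _).trans (add_le_add hR h_bounded)
    _ = δ := ENNReal.add_halves δ

end Equilibrium

section ConvergenceInMeasure

variable {ι X E : Type*} [MeasurableSpace X] {μ : Measure X} [NormedAddCommGroup E]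
  {l : Filter ι} {p q : ℝ≥0∞}

lemma eLpNorm_indicator_le_eLpNorm_mul_measure_rpow {f : X → E} (hf : AEStronglyMeasurable f μ)
    (hqp : q ≤ p) {s : Set X} (hs : MeasurableSet s) :
    eLpNorm (s.indicator f) q μ ≤ eLpNorm f p μ * μ s ^ (1 / q.toReal - 1 / p.toReal) :=
  calc eLpNorm (s.indicator f) q μ
      = eLpNorm f q (μ.restrict s) := eLpNorm_indicator_eq_eLpNorm_restrict hs
    _ ≤ eLpNorm f p (μ.restrict s) * μ s ^ (1 / q.toReal - 1 / p.toReal) := by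
        simpa using eLpNorm_le_eLpNorm_mul_rpow_measure_univ hqp hf.restrict
    _ ≤ eLpNorm f p μ * μ s ^ (1 / q.toReal - 1 / p.toReal) := by
        gcongr ?_ * _
        exact eLpNorm_restrict_le f p μ s

variable [IsFiniteMeasure μ] {f : ι → X → E} {g : X → E} {C : ℝ≥0∞}

lemma exists_pos_forall_ae_norm_le_eLpNorm_le (q : ℝ≥0∞) {η : ℝ≥0∞} (hη : η ≠ 0) :
    ∃ ε : ℝ, 0 < ε ∧ ∀ f : X → E, (∀ᵐ x ∂μ, ‖f x‖ ≤ ε) → eLpNorm f q μ ≤ η := by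
  have h_ofReal : Tendsto ENNReal.ofReal (𝓝[>] 0) (𝓝 0) := by
    simpa using (ENNReal.continuous_ofReal.tendsto 0).mono_left nhdsWithin_le_nhds
  have h_bound : Tendsto (fun ε => μ univ ^ q.toReal⁻¹ * ENNReal.ofReal ε) (𝓝[>] 0) (𝓝 0) := by
    simpa using ENNReal.Tendsto.const_mul h_ofReal
      (.inr (ENNReal.rpow_ne_top_of_nonneg (by positivity) (measure_ne_top μ univ)))
  obtain ⟨ε, hεη, hε⟩ :=
    ((ENNReal.tendsto_nhds_zero.1 h_bound η hη.bot_lt).and self_mem_nhdsWithin).exists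
  exact ⟨ε, hε, fun f hf => (eLpNorm_le_of_ae_bound hf).trans hεη⟩

lemma tendsto_eLpNorm_zero_of_tendstoInMeasure_zero (hqp : q < p)
    (hf : ∀ i, AEStronglyMeasurable (f i) μ) (hC : C ≠ ∞)
    (bound : ∀ᶠ i in l, eLpNorm (f i) p μ ≤ C) (h : TendstoInMeasure μ f l 0) :
    Tendsto (fun i => eLpNorm (f i) q μ) l (𝓝 0) := by
  rcases eq_or_ne q 0 with rfl | hq
  · simpa using tendsto_const_nhds
  refine ENNReal.tendsto_nhds_zero.2 fun δ hδ => ?_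
  obtain ⟨η, hη, h_add⟩ := exists_Lp_half E μ q hδ.ne'
  obtain ⟨ε, hε, h_le_η⟩ := exists_pos_forall_ae_norm_le_eLpNorm_le (E := E) (μ := μ) q hη.ne'
  set θ : ℝ := 1 / q.toReal - 1 / p.toReal
  have hθ : 0 < θ := by
    rcases eq_or_ne p ∞ with rfl | hp
    · simpa [θ] using ENNReal.toReal_pos hq hqp.ne
    · exact sub_pos.2 (one_div_lt_one_div_of_lt (ENNReal.toReal_pos hq hqp.ne_top)
        (ENNReal.toReal_strict_mono hp hqp))
  have h_large : Tendsto (fun i => C * μ {x | ε ≤ ‖f i x‖} ^ θ) l (𝓝 0) := by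
    have h_measure : Tendsto (fun i => μ {x | ε ≤ ‖f i x‖}) l (𝓝 0) := by
      simpa using tendstoInMeasure_iff_norm.1 h ε hε
    simpa [hθ, hθ.le] using ENNReal.Tendsto.const_mul (h_measure.ennrpow_const θ) (.inr hC)
  filter_upwards [bound, ENNReal.tendsto_nhds_zero.1 h_large η hη] with i hi hiη
  -- `f i` is only a.e. measurable, so `{x | ε ≤ ‖f i x‖}` need not be measurable.
  set s := toMeasurable μ {x | ε ≤ ‖f i x‖}
  have hs : MeasurableSet s := measurableSet_toMeasurable _ _
  have h_on : eLpNorm (s.indicator (f i)) q μ ≤ η :=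
    calc eLpNorm (s.indicator (f i)) q μ
        ≤ eLpNorm (f i) p μ * μ s ^ θ :=
          eLpNorm_indicator_le_eLpNorm_mul_measure_rpow (hf i) hqp.le hs
      _ ≤ C * μ {x | ε ≤ ‖f i x‖} ^ θ := by rw [measure_toMeasurable]; gcongr
      _ ≤ η := hiη
  have h_off : eLpNorm (sᶜ.indicator (f i)) q μ ≤ η := by
    refine h_le_η _ (ae_of_all μ fun x => ?_)
    by_cases hx : x ∈ s
    · simpa [hx] using hε.le
    · simpa [hx] using (not_le.1 fun hxε => hx (subset_toMeasurable μ _ hxε)).le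
  simpa using (h_add _ _ ((hf i).indicator hs) ((hf i).indicator hs.compl) h_on h_off).le

theorem tendsto_eLpNorm_sub_of_tendstoInMeasure [l.IsCountablyGenerated] (hqp : q < p)
    (hf : ∀ i, AEStronglyMeasurable (f i) μ) (hC : C ≠ ∞)
    (bound : ∀ᶠ i in l, eLpNorm (f i) p μ ≤ C) (h : TendstoInMeasure μ f l g) :
    Tendsto (fun i => eLpNorm (f i - g) q μ) l (𝓝 0) := by
  rcases l.eq_or_neBot with rfl | _
  · exact tendsto_bot
  have hg : AEStronglyMeasurable g μ := h.aestronglyMeasurable hf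
  have hgC : eLpNorm g p μ ≤ C := eLpNorm_le_of_tendstoInMeasure bound h hf
  have h_sub : ∀ᶠ i in l, eLpNorm (f i - g) p μ ≤ ENNReal.LpAddConst p * (C + C) :=
    bound.mono fun i hi => (eLpNorm_sub_le' (hf i) hg p).trans (by gcongr)
  refine tendsto_eLpNorm_zero_of_tendstoInMeasure_zero hqp (fun i => (hf i).sub hg)
    (ENNReal.mul_ne_top (ENNReal.LpAddConst_lt_top p).ne (ENNReal.add_ne_top.2 ⟨hC, hC⟩)) h_sub ?_
  simpa [tendstoInMeasure_iff_norm] using h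

end ConvergenceInMeasure

lemma lintegral_ofReal_abs_rpow_eq_eLpNorm_rpow {X : Type*} [MeasurableSpace X] {μ : Measure X}
    (f : X → ℝ) {p : ℝ} (hp : 0 < p) :
    ∫⁻ x, ENNReal.ofReal (|f x| ^ p) ∂μ = eLpNorm f (ENNReal.ofReal p) μ ^ p := by
  rw [eLpNorm_eq_eLpNorm' (by simpa using hp) ENNReal.ofReal_ne_top,
    ENNReal.toReal_ofReal hp.le, ← lintegral_rpow_enorm_eq_rpow_eLpNorm' hp]
  simp_rw [Real.enorm_eq_ofReal_abs, ENNReal.ofReal_rpow_of_nonneg (abs_nonneg _) hp.le]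

theorem equilibrium_weakStar_to_strong_general {ι X : Type*} [MeasurableSpace X] (μ : Measure X)
    [IsFiniteMeasure μ] {l : Filter ι} [l.IsCountablyGenerated] {p q : ℝ} (hq : 0 < q)
    (hqp : q < p) {u : ι → X → ℝ} {v : X → ℝ} (hu : ∀ i, Measurable (u i)) (hv : Measurable v)
    (hmom : ∃ C : ℝ≥0∞, C ≠ ∞ ∧ ∀ i, ∫⁻ x, ENNReal.ofReal (|u i x| ^ p) ∂μ ≤ C)
    (hweak : WeakStarTendsto (μ.prod volume) (fun i => equilibriumKinetic (u i)) l
      (equilibriumKinetic v)) :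
    Tendsto (fun i => ∫⁻ x, ENNReal.ofReal (|u i x - v x| ^ q) ∂μ) l (𝓝 0) := by
  have hp : 0 < p := hq.trans hqp
  obtain ⟨C, hC, hmom⟩ := hmom
  have h_bound (i : ι) : eLpNorm (u i) (ENNReal.ofReal p) μ ≤ C ^ p⁻¹ := by
    rw [ENNReal.le_rpow_inv_iff hp, ← lintegral_ofReal_abs_rpow_eq_eLpNorm_rpow (u i) hp]
    exact hmom i
  have h_eLpNorm := tendsto_eLpNorm_sub_of_tendstoInMeasure
    ((ENNReal.ofReal_lt_ofReal_iff hp).2 hqp) (fun i => (hu i).aestronglyMeasurable)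
    (ENNReal.rpow_ne_top_of_nonneg (by positivity) hC) (.of_forall h_bound)
    (tendstoInMeasure_of_weakStarTendsto_equilibriumKinetic hu hv hweak)
  have h_rpow := h_eLpNorm.ennrpow_const q
  simp_rw [← lintegral_ofReal_abs_rpow_eq_eLpNorm_rpow _ hq, ENNReal.zero_rpow_of_pos hq] at h_rpow
  exact h_rpow

/-- Reduction of weak-* convergence of equilibrium kinetic
functions to strong convergence: if `u_n, u : X → ℝ` are measurable with a uniform
`p`-th moment bound and the kinetic functions `1_{u_n > ξ}` converge weak-* in
`L^∞(X × ℝ)` to `1_{u > ξ}`, then `u_n → u` strongly in `L^q(X,λ)` for every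
`1 ≤ q < p`, i.e. `∫ |u_n - u|^q dλ → 0`. -/
theorem equilibrium_weakStar_to_strong
    {X : Type*} [MeasurableSpace X] (lam : Measure X) [IsFiniteMeasure lam]
    (p : ℝ) (hp : 1 ≤ p) (u : ℕ → X → ℝ) (v : X → ℝ)
    (humeas : ∀ n, Measurable (u n)) (hvmeas : Measurable v)
    (hmom : ∃ C : ℝ≥0∞, C ≠ ⊤ ∧
      ∀ n, (∫⁻ z, ENNReal.ofReal (|u n z| ^ p) ∂lam) ≤ C)
    (hvmom : (∫⁻ z, ENNReal.ofReal (|v z| ^ p) ∂lam) ≠ ⊤)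
    (hweak : ∀ g : X × ℝ → ℝ, Integrable g (lam.prod volume) →
      Tendsto
        (fun n => ∫ q : X × ℝ,
          (if q.2 < u n q.1 then (1 : ℝ) else 0) * g q ∂(lam.prod volume)) atTop
        (𝓝 (∫ q : X × ℝ,
          (if q.2 < v q.1 then (1 : ℝ) else 0) * g q ∂(lam.prod volume))))
    (q : ℝ) (hq1 : 1 ≤ q) (hqp : q < p) :
    Tendsto (fun n => ∫⁻ z, ENNReal.ofReal (|u n z - v z| ^ q) ∂lam) atTop (𝓝 0) :=
  equilibrium_weakStar_to_strong_general lam (zero_lt_one.trans_le hq1) hqp humeas hvmeas hmom hweak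
end
end
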